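/- arXiv:2412.20874 — 2 statements merged into one kernel-verified Lean document; each statement's English description precedes it below -/
import Mathlib

section
/- Let G be a graph and C a circuit in G such that every edge of C is contained in a thread of G of length at least q. If G admits a Z2×Z2-flow f, then G admits a Z2×Z2-flow g such that supp(f) − E(C) = supp(g) − E(C) and |E_{g=(0,0)}(C)| ≤ (1/4)(|E(C)| − q). -/
/-- A finite multigraph: loops and multiple edges are allowed.  Each edge is
assigned its (unordered) pair of endpoints. -/
structure Multigraph where
  V : Type
  E : Type
  finV : Finite V
  finE : Finite E
  ends : E → Sym2 V

attribute [instance] Multigraph.finV Multigraph.finE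

namespace Multigraph

/-- A walk of length `n`: a sequence of `n+1` vertices and `n` edges, each edge
joining consecutive vertices. -/
structure Walk (G : Multigraph) (n : ℕ) where
  vtx : Fin (n + 1) → G.V
  edge : Fin n → G.E
  compat : ∀ i : Fin n, G.ends (edge i) = s(vtx i.castSucc, vtx i.succ)

variable (G : Multigraph)

/-- The degree of a vertex (a loop counts twice). -/
noncomputable def degree (v : G.V) : ℕ :=
  Nat.card {e : G.E // v ∈ G.ends e ∧ ¬ (G.ends e).IsDiag} +
    2 * Nat.card {e : G.E // G.ends e = s(v, v)}

/-- The degree of a vertex in the subgraph with edge set `S` (a loop counts twice). -/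
noncomputable def degIn (S : Set G.E) (v : G.V) : ℕ :=
  Nat.card {e : G.E // e ∈ S ∧ v ∈ G.ends e ∧ ¬ (G.ends e).IsDiag} +
    2 * Nat.card {e : G.E // e ∈ S ∧ G.ends e = s(v, v)}

/-- A cycle (identified with its edge set): every vertex has even degree. -/
def IsCycle (S : Set G.E) : Prop := ∀ v : G.V, Even (G.degIn S v)

/-- `u` is joined to `w` by a path using only edges in `S`. -/
def Reaches (S : Set G.E) (u w : G.V) : Prop :=
  Relation.ReflTransGen (fun a b => ∃ e ∈ S, G.ends e = s(a, b)) u w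

/-- A circuit (identified with its edge set): a connected `2`-regular subgraph. -/
def IsCircuit (S : Set G.E) : Prop :=
  S.Nonempty ∧
    (∀ v : G.V, (∃ e ∈ S, v ∈ G.ends e) → G.degIn S v = 2) ∧
    ∀ u w : G.V, (∃ e ∈ S, u ∈ G.ends e) → (∃ e ∈ S, w ∈ G.ends e) → G.Reaches S u w

/-- A `ℤ₂×ℤ₂`-flow: at every vertex the values on the incident edges sum to zero
(a loop contributes its value twice, hence zero). -/
def IsFlow (f : G.E → ZMod 2 × ZMod 2) : Prop :=
  ∀ v : G.V, ∑ᶠ e ∈ {e : G.E | v ∈ G.ends e ∧ ¬ (G.ends e).IsDiag}, f e = 0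

/-- The support of a flow. -/
def supp (f : G.E → ZMod 2 × ZMod 2) : Set G.E := {e | f e ≠ 0}

/-- Contraction of the edge set `C`: delete the edges of `C` and identify the
ends of each edge of `C`. -/
def contract (C : Set G.E) : Multigraph where
  V := Quot fun u w : G.V => ∃ e ∈ C, G.ends e = s(u, w)
  E := {e : G.E // e ∉ C}
  finV := Finite.of_surjective _ (Quot.mk_surjective)
  finE := inferInstance
  ends := fun e => (G.ends e.1).map (Quot.mk _)

/-- A path: all vertices distinct (hence all edges distinct, which we also require). -/
def Walk.IsPath {n : ℕ} (W : G.Walk n) : Prop :=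
  Function.Injective W.vtx ∧ Function.Injective W.edge

/-- A nontrivial path all of whose internal vertices have degree `2` in `G`. -/
def IsDeg2Path {n : ℕ} (W : G.Walk n) : Prop :=
  1 ≤ n ∧ W.IsPath G ∧ ∀ i : Fin (n + 1), 0 < i.val → i.val < n → G.degree (W.vtx i) = 2

/-- A thread of `G`: a maximal path all of whose internal vertices have degree `2`
in `G` (maximal: its edge set is not properly contained in the edge set of
another such path). -/
def IsThread {n : ℕ} (W : G.Walk n) : Prop :=
  G.IsDeg2Path W ∧ ∀ (m : ℕ) (Q : G.Walk m), G.IsDeg2Path Q →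
    Set.range W.edge ⊆ Set.range Q.edge → Set.range Q.edge = Set.range W.edge

/-- A cycle cover: a (multi)collection of cycles covering every edge. -/
def IsCycleCover (𝒞 : Multiset (Set G.E)) : Prop :=
  (∀ S ∈ 𝒞, G.IsCycle S) ∧ ∀ e : G.E, ∃ S ∈ 𝒞, e ∈ S

/-- The length of a cycle cover: the sum of the lengths of its cycles. -/
noncomputable def coverLength (𝒞 : Multiset (Set G.E)) : ℕ :=
  (𝒞.map Set.ncard).sum

/-- The minimum length of a cycle cover of `G`. -/
noncomputable def cc : ℕ :=
  sInf {L : ℕ | ∃ 𝒞 : Multiset (Set G.E), G.IsCycleCover 𝒞 ∧ G.coverLength 𝒞 = L}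

/-- `G` is bridgeless: the ends of each edge `e` are still joined after deleting `e`. -/
def Bridgeless : Prop :=
  ∀ (e : G.E) (u w : G.V), G.ends e = s(u, w) → G.Reaches {e}ᶜ u w

/-- The connected component of the subgraph with edge set `S` containing the edge `e₀`. -/
def component (S : Set G.E) (e₀ : G.E) : Set G.E :=
  {e ∈ S | ∃ u w : G.V, u ∈ G.ends e₀ ∧ w ∈ G.ends e ∧ G.Reaches S u w}

/-- `B` is a connected component of the subgraph with edge set `S`. -/
def IsComponent (S B : Set G.E) : Prop := ∃ e₀ ∈ S, B = G.component S e₀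

/-- A `k`-flow: an orientation `D` (given by the tail/head pair of each edge)
together with an integer-valued function `f` with `|f e| < k`, conserved at
every vertex. -/
def IsIntFlow (k : ℕ) (D : G.E → G.V × G.V) (f : G.E → ℤ) : Prop :=
  (∀ e : G.E, s((D e).1, (D e).2) = G.ends e) ∧
    (∀ e : G.E, |f e| < (k : ℤ)) ∧
    ∀ v : G.V, (∑ᶠ e ∈ {e : G.E | (D e).1 = v}, f e) =
      ∑ᶠ e ∈ {e : G.E | (D e).2 = v}, f e

end Multigraph

/-!
Give each edge of `C` the sign of the first coordinate of its flow value. If the signs of a flow `g`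
around `C` add up to at least `q` in absolute value, then at most `(|C| - q) / 2` edges of `C` carry
the rarer sign, so one of the two values with that sign is taken at most `(|C| - q) / 4` times;
adding it to `g` along `C` turns exactly those edges into zeros.

To reach such a `g`, change the flow without touching its support outside `C`: if the first
coordinates differ on the two edges of `C` at a vertex, a trail outside `C` leads from there to
another vertex of `C`, along which some `c` with first coordinate `1` can be added without creating
or destroying zeros. Closing the trail up along `C` flips the signs on an arc of `C`. An extremal
choice of the flow makes one of these arcs start with a thread of `q` equal signs, so that flipping
it changes the total by at least `2q`: before or after the flip the total is at least `q`.
-/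

section Involutions

variable {α β : Type*}

theorem exists_involutive_of_existsUnique_ne {p : α → β} (h : ∀ a, ∃! b, b ≠ a ∧ p b = p a) :
    ∃ σ : α → α, Function.Involutive σ ∧ (∀ a, σ a ≠ a) ∧
      ∀ a b, p b = p a ↔ b = a ∨ b = σ a := by
  choose σ hσ huniq using h
  dsimp only at hσ huniq
  refine ⟨σ, fun a => (huniq (σ a) a ⟨(hσ a).1.symm, (hσ a).2.symm⟩).symm, fun a => (hσ a).1,
    fun a b => ⟨fun hb => or_iff_not_imp_left.2 fun hne => huniq a b ⟨hne, hb⟩, ?_⟩⟩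
  rintro (rfl | rfl)
  · rfl
  · exact (hσ a).2

/-- Two fixed-point-free involutions generate a dihedral action in which a rotation never agrees
with a reflection on a point: folding the orbit from both ends would produce a fixed point. -/
theorem iterate_comp_ne_of_involutive {σ ρ : α → α} (hσ : σ.Involutive) (hσ' : ∀ a, σ a ≠ a)
    (hρ : ρ.Involutive) (hρ' : ∀ a, ρ a ≠ a) (k : ℕ) (a : α) : (σ ∘ ρ)^[k] a ≠ σ a := by
  induction k using Nat.twoStepInduction generalizing a with
  | zero => exact (hσ' a).symm
  | one => exact fun h => hρ' a (hσ.injective h)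
  | more k ih _ =>
    intro h
    rw [Function.iterate_succ_apply'] at h
    refine ih (σ (ρ a)) ?_
    rw [hσ, ← hρ.injective.eq_iff, hρ]
    exact hσ.injective h

theorem iterate_eq_iterate_iff_modEq [Finite α] {s : α → α} (hs : s.Injective) (a : α) {i j : ℕ} :
    s^[i] a = s^[j] a ↔ i ≡ j [MOD s.minimalPeriod a] := by
  have hpos := Function.minimalPeriod_pos_of_mem_periodicPts (hs.mem_periodicPts a)
  rw [← Function.iterate_mod_minimalPeriod_eq (n := i),
    ← Function.iterate_mod_minimalPeriod_eq (n := j),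
    Function.iterate_eq_iterate_iff_of_lt_minimalPeriod (Nat.mod_lt _ hpos) (Nat.mod_lt _ hpos)]
  rfl

end Involutions

/-! ### Sequences of signs -/

/-- The first coordinate of an element of `ℤ₂ × ℤ₂`, written as a sign. -/
def firstSign (x : ZMod 2 × ZMod 2) : ℤ := if x.1 = 0 then 1 else -1

theorem firstSign_eq_one_or (x : ZMod 2 × ZMod 2) : firstSign x = 1 ∨ firstSign x = -1 :=
  ite_eq_or_eq _ _ _

theorem firstSign_add {x c : ZMod 2 × ZMod 2} (hc : c.1 = 1) :
    firstSign (x + c) = -firstSign x := by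
  revert x c
  decide

/-- The partial sums of the signs of a sequence in `ℤ₂ × ℤ₂`. -/
def signSum (a : ℕ → ZMod 2 × ZMod 2) (k : ℕ) : ℤ := ∑ i ∈ Finset.range k, firstSign (a i)

theorem sum_univ_zmod_two_prod {M : Type*} [AddCommMonoid M] (F : ZMod 2 × ZMod 2 → M) :
    ∑ z, F z = F (0, 0) + F (0, 1) + (F (1, 0) + F (1, 1)) := by
  rw [Fintype.sum_prod_type]
  exact (Fin.sum_univ_two _).trans
    (congrArg₂ (· + ·) (Fin.sum_univ_two _) (Fin.sum_univ_two _))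

theorem exists_four_mul_card_filter_add_le {ι : Type*} (s : Finset ι) (a : ι → ZMod 2 × ZMod 2)
    {q : ℕ} (hq : (q : ℤ) ≤ |∑ i ∈ s, firstSign (a i)|) :
    ∃ z, 4 * (s.filter fun i => a i = z).card + q ≤ s.card := by
  let N (z : ZMod 2 × ZMod 2) : ℕ := (s.filter fun i => a i = z).card
  have hcard : s.card = ∑ z, N z := Finset.card_eq_sum_card_fiberwise fun i _ => Finset.mem_univ _
  have hsum : ∑ i ∈ s, firstSign (a i) = ∑ z, N z * firstSign z := by
    rw [← Finset.sum_fiberwise s a]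
    refine Finset.sum_congr rfl fun z _ => ?_
    rw [Finset.sum_congr rfl fun i hi => congrArg firstSign (Finset.mem_filter.1 hi).2,
      Finset.sum_const, nsmul_eq_mul]
  rw [sum_univ_zmod_two_prod] at hcard
  rw [hsum, sum_univ_zmod_two_prod] at hq
  simp only [firstSign, reduceIte, one_ne_zero, mul_one, mul_neg] at hq
  change ∃ z, 4 * N z + q ≤ s.card
  by_contra! hlt
  have h₀ := hlt (0, 0)
  have h₁ := hlt (0, 1)
  have h₂ := hlt (1, 0)
  have h₃ := hlt (1, 1)
  rcases le_abs.1 hq with h | h <;> omega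

section SignSum

variable {a a' : ℕ → ZMod 2 × ZMod 2}

theorem signSum_zero (a : ℕ → ZMod 2 × ZMod 2) : signSum a 0 = 0 := Finset.sum_range_zero _

theorem signSum_succ (a : ℕ → ZMod 2 × ZMod 2) (k : ℕ) :
    signSum a (k + 1) = signSum a k + firstSign (a k) :=
  Finset.sum_range_succ _ k

theorem signSum_succ_ne (a : ℕ → ZMod 2 × ZMod 2) (k : ℕ) : signSum a (k + 1) ≠ signSum a k := by
  rw [signSum_succ]
  rcases firstSign_eq_one_or (a k) with h | h <;> omega

theorem fst_ne_fst_of_signSum_le {k : ℕ} (hprev : signSum a k ≤ signSum a (k + 1))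
    (hnext : signSum a (k + 1 + 1) ≤ signSum a (k + 1)) : (a k).1 ≠ (a (k + 1)).1 := by
  intro heq
  have hsign : firstSign (a k) = firstSign (a (k + 1)) :=
    congrArg (fun x : ZMod 2 => if x = 0 then (1 : ℤ) else -1) heq
  rw [signSum_succ] at hprev hnext
  rcases firstSign_eq_one_or (a k) with h | h <;> omega

theorem signSum_congr {k : ℕ} (h : ∀ i < k, a i = a' i) : signSum a k = signSum a' k :=
  Finset.sum_congr rfl fun i hi => congrArg firstSign (h i (Finset.mem_range.1 hi))

theorem signSum_add_of_eq {k q : ℕ} (h : ∀ i < q, a (k + i) = a k) :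
    signSum a (k + q) = signSum a k + q * firstSign (a k) := by
  rw [signSum, Finset.sum_range_add, ← signSum, Finset.sum_congr rfl fun i hi =>
    congrArg firstSign (h i (Finset.mem_range.1 hi)), Finset.sum_const, Finset.card_range,
    nsmul_eq_mul]

theorem signSum_flip {c : ZMod 2 × ZMod 2} (hc : c.1 = 1) {p r k : ℕ} (hpr : p ≤ r) (hpk : p ≤ k)
    (h : ∀ i < k, a' i = if i ∈ Finset.Ico p r then a i + c else a i) :
    signSum a' k = signSum a k - 2 * (signSum a (min k r) - signSum a p) := by
  induction k, hpk using Nat.le_induction with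
  | base =>
    rw [min_eq_left hpr, sub_self, mul_zero, sub_zero]
    refine signSum_congr fun i hi => ?_
    rw [h i hi, if_neg fun hmem => (Finset.mem_Ico.1 hmem).1.not_gt hi]
  | succ k hpk ih =>
    have hih := ih fun i hi => h i (hi.trans k.lt_succ_self)
    rw [signSum_succ, signSum_succ, hih, h k k.lt_succ_self]
    rcases lt_or_ge k r with hkr | hrk
    · rw [if_pos (Finset.mem_Ico.2 ⟨hpk, hkr⟩), firstSign_add hc, min_eq_left hkr.le,
        min_eq_left (Nat.succ_le_of_lt hkr), signSum_succ]
      ring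
    · rw [if_neg fun hmem => (Finset.mem_Ico.1 hmem).2.not_ge hrk, min_eq_right hrk,
        min_eq_right (hrk.trans k.le_succ)]
      ring

end SignSum

namespace Multigraph

variable {G : Multigraph} {B C : Set G.E} {f g : G.E → ZMod 2 × ZMod 2}

/-! ### Chains and their boundaries -/

noncomputable instance : Fintype G.V := Fintype.ofFinite _

noncomputable instance : Fintype G.E := Fintype.ofFinite _

noncomputable instance : DecidableEq G.V := Classical.decEq _

noncomputable instance : DecidableEq G.E := Classical.decEq _

section Chains

variable {A A' : Type*} [AddCommMonoid A] [AddCommMonoid A']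

open Classical in
/-- The edges incident with `v`, loops excluded: a loop contributes twice its value, hence nothing,
to a sum in characteristic two. -/
noncomputable def incidentEdges (G : Multigraph) (v : G.V) : Finset G.E :=
  {e | v ∈ G.ends e ∧ ¬ (G.ends e).IsDiag}

theorem mem_incidentEdges {v : G.V} {e : G.E} :
    e ∈ G.incidentEdges v ↔ v ∈ G.ends e ∧ ¬ (G.ends e).IsDiag := by
  simp [incidentEdges]

/-- The boundary of a `1`-chain: the sum of its values around each vertex. It is the boundary map of
the graph when `A` has characteristic two, and flows are its zeros. -/
noncomputable def boundary (G : Multigraph) : (G.E → A) →+ (G.V → A) where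
  toFun f v := ∑ e ∈ G.incidentEdges v, f e
  map_zero' := funext fun _ => Finset.sum_const_zero
  map_add' _ _ := funext fun _ => Finset.sum_add_distrib

theorem boundary_apply (f : G.E → A) (v : G.V) :
    G.boundary f v = ∑ e ∈ G.incidentEdges v, f e := rfl

theorem isFlow_iff_boundary_eq_zero : G.IsFlow f ↔ G.boundary f = 0 := by
  rw [funext_iff]
  refine forall_congr' fun v => ?_
  rw [boundary_apply, finsum_mem_eq_sum_of_inter_support_eq]
  · rfl
  · ext e
    simp [mem_incidentEdges]

theorem boundary_comp (φ : A →+ A') (f : G.E → A) (v : G.V) :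
    G.boundary (φ ∘ f) v = φ (G.boundary f v) :=
  (map_sum φ f _).symm

theorem boundary_smul_const {R : Type*} [Semiring R] [Module R A] (t : G.E → R) (c : A) (v : G.V) :
    G.boundary (fun e => t e • c) v = G.boundary t v • c :=
  Finset.sum_smul.symm

theorem IsFlow.add_smul (hf : G.IsFlow f) {t : G.E → ZMod 2} (ht : G.boundary t = 0)
    (c : ZMod 2 × ZMod 2) : G.IsFlow (f + fun e => t e • c) := by
  rw [isFlow_iff_boundary_eq_zero] at hf ⊢
  ext1 v
  rw [map_add, hf, zero_add, boundary_smul_const, ht, Pi.zero_apply, zero_smul, Pi.zero_apply]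

theorem boundary_single {e : G.E} {a b : G.V} (h : G.ends e = s(a, b)) :
    G.boundary (Pi.single e (1 : ZMod 2)) = Pi.single a 1 + Pi.single b 1 := by
  ext1 v
  rw [boundary_apply, Finset.sum_pi_single']
  simp only [mem_incidentEdges, h, Sym2.mem_iff, Sym2.mk_isDiag_iff, Pi.add_apply, Pi.single_apply]
  by_cases hab : a = b
  · simp [hab, ZModModule.add_self]
  · by_cases hva : v = a
    · simp [hva, hab]
    · simp [hva, hab]

theorem Reaches.exists_boundary_eq {S : Set G.E} {x y : G.V} (h : G.Reaches S x y) :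
    ∃ t : G.E → ZMod 2, (∀ e ∉ S, t e = 0) ∧ G.boundary t = Pi.single x 1 + Pi.single y 1 := by
  induction h with
  | refl => exact ⟨0, fun _ _ => rfl, by rw [map_zero, ZModModule.add_self]⟩
  | @tail b c _ hbc ih =>
    obtain ⟨t, ht, hbd⟩ := ih
    obtain ⟨a, ha, hends⟩ := hbc
    refine ⟨t + Pi.single a 1, fun e he => ?_, ?_⟩
    · rw [Pi.add_apply, ht e he, Pi.single_eq_of_ne (ne_of_mem_of_not_mem ha he).symm, add_zero]
    · rw [map_add, hbd, boundary_single hends, ZModModule.add_add_add_cancel]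

theorem sum_boundary_eq_zero {w : G.E → ZMod 2} {K : Finset G.V}
    (hK : ∀ e a b, w e ≠ 0 → G.ends e = s(a, b) → (a ∈ K ↔ b ∈ K)) :
    ∑ z ∈ K, G.boundary w z = 0 := by
  have hedge : ∀ e, ∑ z ∈ K, G.boundary (Pi.single e (w e)) z = 0 := by
    intro e
    by_cases he : w e = 0
    · rw [he, Pi.single_zero, map_zero]
      exact Finset.sum_const_zero
    · obtain ⟨a, b, hab⟩ : ∃ a b, G.ends e = s(a, b) := Sym2.exists.1 ⟨_, rfl⟩
      have hone : w e = 1 := Fin.eq_one_of_ne_zero _ he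
      rw [hone, boundary_single hab]
      simp only [Pi.add_apply, Finset.sum_add_distrib, Pi.single_apply, Finset.sum_ite_eq',
        hK e a b he hab, ZModModule.add_self]
  rw [← Finset.univ_sum_single w, map_sum]
  simp only [Finset.sum_apply]
  rw [Finset.sum_comm]
  exact Finset.sum_eq_zero fun e _ => hedge e

theorem exists_reaches_boundary_ne_zero {w : G.E → ZMod 2} {x : G.V} (hx : G.boundary w x ≠ 0) :
    ∃ y ≠ x, G.Reaches {e | w e ≠ 0} x y ∧ G.boundary w y ≠ 0 := by
  classical
  by_contra! hzero
  refine hx ?_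
  let K : Finset G.V := {y | G.Reaches {e | w e ≠ 0} x y}
  have hxK : x ∈ K := Finset.mem_filter.2 ⟨Finset.mem_univ x, .refl⟩
  rw [← Finset.sum_eq_single_of_mem x hxK fun y hy hyx => hzero y hyx (Finset.mem_filter.1 hy).2]
  refine sum_boundary_eq_zero fun e a b he hab => ?_
  simp only [K, Finset.mem_filter_univ]
  exact ⟨fun h => h.tail ⟨e, he, hab⟩, fun h => h.tail ⟨e, he, hab.trans Sym2.eq_swap⟩⟩

/-- The vertices incident with an edge outside `C`. For a circuit `C` they cut it into the pieces
that the threads of `G` run through. -/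
def IsBranch (G : Multigraph) (C : Set G.E) (x : G.V) : Prop := ∃ y ∉ C, x ∈ G.ends y

theorem boundary_indicator_compl_of_not_isBranch {x : G.V} (hx : ¬ G.IsBranch C x) (u : G.E → A) :
    G.boundary (Cᶜ.indicator u) x = 0 :=
  Finset.sum_eq_zero fun y hy =>
    Set.indicator_of_notMem (fun hyC => hx ⟨y, hyC, (mem_incidentEdges.1 hy).1⟩) u

theorem boundary_indicator_compl_of_forall_notMem {x : G.V} (hx : ∀ y ∈ C, x ∉ G.ends y)
    (u : G.E → A) : G.boundary (Cᶜ.indicator u) x = G.boundary u x :=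
  Finset.sum_congr rfl fun y hy =>
    Set.indicator_of_mem (s := Cᶜ) (fun hyC => hx y hyC (mem_incidentEdges.1 hy).1) u

end Chains

/-! ### Running around a circuit -/

/-- `v` and `e` run around `C` with period `n`: they list its `n` vertices and `n` edges, each edge
`e i` joining `v i` to `v (i + 1)`. Indices are natural numbers, taken modulo `n`. -/
structure IsCyclicEnumeration (C : Set G.E) (n : ℕ) (v : ℕ → G.V) (e : ℕ → G.E) : Prop where
  one_lt : 1 < n
  ends_edge : ∀ i, G.ends (e i) = s(v i, v (i + 1))
  vtx_eq_iff : ∀ i j, v i = v j ↔ i ≡ j [MOD n]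
  edge_eq_iff : ∀ i j, e i = e j ↔ i ≡ j [MOD n]
  range_edge : Set.range e = C

/-- The flags of `C`: incident pairs of a vertex and an edge of `C`. -/
def Flag (C : Set G.E) : Type := {d : G.V × G.E // d.2 ∈ C ∧ d.1 ∈ G.ends d.2}

instance : Finite (Flag C) :=
  inferInstanceAs (Finite {d : G.V × G.E // d.2 ∈ C ∧ d.1 ∈ G.ends d.2})

namespace Flag

/-- The vertex of a flag. -/
def vtx (d : Flag C) : G.V := d.1.1

/-- The edge of a flag. -/
def edge (d : Flag C) : G.E := d.1.2

theorem edge_mem (d : Flag C) : d.edge ∈ C := d.2.1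

theorem vtx_mem (d : Flag C) : d.vtx ∈ G.ends d.edge := d.2.2

theorem ext_iff {d d' : Flag C} : d = d' ↔ d.vtx = d'.vtx ∧ d.edge = d'.edge :=
  Subtype.ext_iff.trans Prod.ext_iff

end Flag

theorem existsUnique_flag_ne_of_edge_eq (hloop : ∀ e ∈ C, ¬ (G.ends e).IsDiag) (d : Flag C) :
    ∃! d' : Flag C, d' ≠ d ∧ d'.edge = d.edge := by
  obtain ⟨y, hy⟩ := d.vtx_mem
  have hne : d.vtx ≠ y := fun h => hloop _ d.edge_mem (by rw [hy, Sym2.mk_isDiag_iff, h])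
  refine ⟨⟨(y, d.edge), d.edge_mem, by rw [hy]; exact Sym2.mem_mk_right _ _⟩,
    ⟨fun h => hne (Flag.ext_iff.1 h).1.symm, rfl⟩, ?_⟩
  rintro d' ⟨hd', hedge⟩
  have hmem := d'.vtx_mem
  rw [hedge, hy, Sym2.mem_iff] at hmem
  exact Flag.ext_iff.2 ⟨hmem.resolve_left fun h => hd' (Flag.ext_iff.2 ⟨h, hedge⟩), hedge⟩

theorem IsCircuit.ncard_incident_eq_two (hC : G.IsCircuit C)
    (hloop : ∀ e ∈ C, ¬ (G.ends e).IsDiag) {x : G.V} (hx : ∃ e ∈ C, x ∈ G.ends e) :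
    {e | e ∈ C ∧ x ∈ G.ends e}.ncard = 2 := by
  have hnoloop : IsEmpty {e : G.E // e ∈ C ∧ G.ends e = s(x, x)} :=
    ⟨fun e => hloop e.1 e.2.1 (by rw [e.2.2]; exact Sym2.diag_isDiag x)⟩
  rw [← hC.2.1 x hx, degIn, Nat.card_eq_zero.2 (.inl hnoloop), mul_zero, add_zero]
  refine congrArg Set.ncard (Set.ext fun e => ?_)
  exact ⟨fun he => ⟨he.1, he.2, hloop e he.1⟩, fun he => ⟨he.1, he.2.1⟩⟩

theorem IsCircuit.existsUnique_flag_ne_of_vtx_eq (hC : G.IsCircuit C)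
    (hloop : ∀ e ∈ C, ¬ (G.ends e).IsDiag) (d : Flag C) :
    ∃! d' : Flag C, d' ≠ d ∧ d'.vtx = d.vtx := by
  have hcard := hC.ncard_incident_eq_two hloop ⟨d.edge, d.edge_mem, d.vtx_mem⟩
  have hd : d.edge ∈ {e | e ∈ C ∧ d.vtx ∈ G.ends e} := ⟨d.edge_mem, d.vtx_mem⟩
  obtain ⟨b, hb⟩ : ∃ b, {e | e ∈ C ∧ d.vtx ∈ G.ends e} \ {d.edge} = {b} := by
    rw [← Set.ncard_eq_one, Set.ncard_sdiff_singleton_of_mem hd, hcard]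
  have hiff (e : G.E) : (e ∈ C ∧ d.vtx ∈ G.ends e) ∧ e ≠ d.edge ↔ e = b := Set.ext_iff.1 hb e
  obtain ⟨hbC, hbd⟩ := (hiff b).2 rfl
  refine ⟨⟨(d.vtx, b), hbC⟩, ⟨fun h => hbd (Flag.ext_iff.1 h).2, rfl⟩, ?_⟩
  rintro d' ⟨hd', hvtx⟩
  refine Flag.ext_iff.2 ⟨hvtx, (hiff _).1 ⟨⟨d'.edge_mem, hvtx ▸ d'.vtx_mem⟩, fun h => ?_⟩⟩
  exact hd' (Flag.ext_iff.2 ⟨hvtx, h⟩)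

theorem IsCircuit.mem_range_edge_of_closed (hC : G.IsCircuit C) {v : ℕ → G.V} {e : ℕ → G.E}
    (hends : ∀ i, G.ends (e i) = s(v i, v (i + 1))) (he : ∀ i, e i ∈ C)
    (hclosed : ∀ i, ∀ y ∈ C, v i ∈ G.ends y → y ∈ Set.range e) {y : G.E} (hy : y ∈ C) :
    y ∈ Set.range e := by
  have hreach (w : G.V) (hw : G.Reaches C (v 0) w) : w ∈ Set.range v := by
    induction hw with
    | refl => exact ⟨0, rfl⟩
    | @tail _ c _ hstep ih =>
      obtain ⟨i, rfl⟩ := ih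
      obtain ⟨z, hzC, hz⟩ := hstep
      obtain ⟨j, rfl⟩ := hclosed i z hzC (by rw [hz]; exact Sym2.mem_mk_left _ _)
      have hmem := Sym2.mem_mk_right (v i) c
      rw [← hz, hends, Sym2.mem_iff] at hmem
      rcases hmem with h | h
      exacts [⟨j, h.symm⟩, ⟨j + 1, h.symm⟩]
  obtain ⟨a, b, hab⟩ : ∃ a b, G.ends y = s(a, b) := Sym2.exists.1 ⟨_, rfl⟩
  have ha : a ∈ G.ends y := by rw [hab]; exact Sym2.mem_mk_left a b
  have hv0 : v 0 ∈ G.ends (e 0) := by rw [hends]; exact Sym2.mem_mk_left _ _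
  obtain ⟨i, rfl⟩ := hreach a (hC.2.2 _ _ ⟨e 0, he 0, hv0⟩ ⟨y, hy, ha⟩)
  exact hclosed i y hy ha

/-- Turning to the other flag at the same vertex and to the other flag on the same edge are
fixed-point-free involutions, and their composite walks around the circuit. -/
theorem IsCircuit.exists_flag_sequence (hC : G.IsCircuit C)
    (hloop : ∀ e ∈ C, ¬ (G.ends e).IsDiag) (d₀ : Flag C) :
    ∃ (n : ℕ) (d : ℕ → Flag C), 0 < n ∧ d 0 = d₀ ∧
      (∀ i j, (d i).vtx = (d j).vtx ↔ i ≡ j [MOD n]) ∧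
      (∀ i j, (d i).edge = (d j).edge ↔ i ≡ j [MOD n]) ∧
      (∀ i, (d (i + 1)).vtx ≠ (d i).vtx ∧ (d (i + 1)).vtx ∈ G.ends (d i).edge) ∧
      ∀ i, ∀ d' : Flag C, d'.vtx = (d (i + 1)).vtx →
        d'.edge = (d i).edge ∨ d'.edge = (d (i + 1)).edge := by
  obtain ⟨σ, hσ, hσ', hσvtx⟩ :=
    exists_involutive_of_existsUnique_ne (hC.existsUnique_flag_ne_of_vtx_eq hloop)
  obtain ⟨ρ, hρ, hρ', hρedge⟩ :=
    exists_involutive_of_existsUnique_ne (existsUnique_flag_ne_of_edge_eq hloop)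
  have hinj : (σ ∘ ρ).Injective := hσ.injective.comp hρ.injective
  let d (i : ℕ) : Flag C := (σ ∘ ρ)^[i] d₀
  have hd_eq (i j) : d i = d j ↔ i ≡ j [MOD _] := iterate_eq_iterate_iff_modEq hinj d₀
  have hσ_succ (i) : σ (d (i + 1)) = ρ (d i) := by
    rw [show d (i + 1) = σ (ρ (d i)) from Function.iterate_succ_apply' _ _ _, hσ]
  have hd_ne (i j) : d i ≠ σ (d j) := by
    wlog hij : j ≤ i generalizing i j
    · exact fun h => this j i (le_of_not_ge hij) (hσ.injective (by rw [hσ, h]))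
    obtain ⟨k, rfl⟩ := Nat.exists_eq_add_of_le' hij
    have hne := iterate_comp_ne_of_involutive hσ hσ' hρ hρ' k (d j)
    rwa [← Function.iterate_add_apply] at hne
  have hedge_succ (i) : (σ (d (i + 1))).edge = (d i).edge := by
    rw [hσ_succ]
    exact (hρedge _ _).2 (.inr rfl)
  have hvtx_succ (i) : (σ (d (i + 1))).vtx = (d (i + 1)).vtx := (hσvtx _ _).2 (.inr rfl)
  refine ⟨_, d, Function.minimalPeriod_pos_of_mem_periodicPts (hinj.mem_periodicPts d₀), rfl,
    fun i j => ?_, fun i j => ?_, fun i => ⟨fun h => ?_, ?_⟩, fun i d' hd' => ?_⟩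
  · rw [hσvtx, or_iff_left (hd_ne i j), hd_eq]
  · rw [hρedge, ← hσ_succ, or_iff_left (hd_ne i (j + 1)), hd_eq]
  · refine hρ' (d i) ?_
    rw [← hσ_succ]
    exact Flag.ext_iff.2 ⟨(hvtx_succ i).trans h, hedge_succ i⟩
  · rw [← hvtx_succ, ← hedge_succ]
    exact Flag.vtx_mem _
  · rcases (hσvtx _ _).1 hd' with rfl | rfl
    exacts [.inr rfl, .inl (hedge_succ i)]

theorem IsCircuit.exists_isCyclicEnumeration (hC : G.IsCircuit C)
    (hloop : ∀ e ∈ C, ¬ (G.ends e).IsDiag) {x : G.V} (hx : ∃ e ∈ C, x ∈ G.ends e) :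
    ∃ n v e, IsCyclicEnumeration C n v e ∧ v 0 = x := by
  obtain ⟨e₀, he₀⟩ := hx
  obtain ⟨n, d, hn, hd₀, hvtx, hedge, hsucc, hcover⟩ :=
    hC.exists_flag_sequence hloop ⟨(x, e₀), he₀⟩
  have hends (i) : G.ends (d i).edge = s((d i).vtx, (d (i + 1)).vtx) :=
    (Sym2.mem_and_mem_iff (hsucc i).1.symm).1 ⟨(d i).vtx_mem, (hsucc i).2⟩
  have hclosed (i) (y) (hy : y ∈ C) (hiy : (d i).vtx ∈ G.ends y) :
      y ∈ Set.range fun i => (d i).edge := by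
    obtain ⟨m, rfl⟩ := Nat.exists_eq_succ_of_ne_zero hn.ne'
    have hperiod : (d i).vtx = (d (i + m + 1)).vtx := (hvtx _ _).2 Nat.add_modEq_right.symm
    rcases hcover (i + m) ⟨((d i).vtx, y), hy, hiy⟩ hperiod with h | h
    exacts [⟨i + m, h.symm⟩, ⟨i + m + 1, h.symm⟩]
  have hone : n ≠ 1 := by
    rintro rfl
    exact (hsucc 0).1 ((hvtx 1 0).2 Nat.modEq_one)
  refine ⟨n, fun i => (d i).vtx, fun i => (d i).edge,
    ⟨by omega, hends, hvtx, hedge, Set.Subset.antisymm ?_ fun y hy => ?_⟩, congrArg Flag.vtx hd₀⟩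
  · exact Set.range_subset_iff.2 fun i => (d i).edge_mem
  · exact hC.mem_range_edge_of_closed hends (fun i => (d i).edge_mem) hclosed hy

/-! ### Threads and the segments of a circuit -/

/-- `B` is a union of segments of `C`, a segment being a piece into which the branch vertices
cut `C`. -/
structure IsSegmentUnion (C B : Set G.E) : Prop where
  subset : B ⊆ C
  closed : ∀ b ∈ B, ∀ x ∈ G.ends b, ¬ G.IsBranch C x → ∀ y ∈ C, x ∈ G.ends y → y ∈ B

theorem isSegmentUnion_self (C : Set G.E) : IsSegmentUnion C C :=
  ⟨subset_rfl, fun _ _ _ _ _ _ hy _ => hy⟩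

theorem IsDeg2Path.not_isDiag {n : ℕ} {W : G.Walk n} (hW : G.IsDeg2Path W) {x : G.E}
    (hx : x ∈ Set.range W.edge) : ¬ (G.ends x).IsDiag := by
  obtain ⟨i, rfl⟩ := hx
  rw [W.compat, Sym2.mk_isDiag_iff]
  exact fun h => (Fin.castSucc_lt_succ (i := i)).ne (hW.2.1.1 h)

theorem IsDeg2Path.range_edge_subset {n : ℕ} {W : G.Walk n} (hW : G.IsDeg2Path W) {x : G.E}
    (hx : x ∈ Set.range W.edge) (hxB : x ∈ B)
    (hB : ∀ b ∈ B, ∀ a ∈ G.ends b, G.degree a = 2 → ∀ y, a ∈ G.ends y → y ∈ B) :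
    Set.range W.edge ⊆ B := by
  have hsucc (i : ℕ) (hi : i + 1 < n) :
      W.edge ⟨i, i.lt_succ_self.trans hi⟩ ∈ B ↔ W.edge ⟨i + 1, hi⟩ ∈ B := by
    have hdeg := hW.2.2 ⟨i + 1, hi.trans n.lt_succ_self⟩ i.succ_pos hi
    have hleft : W.vtx ⟨i + 1, hi.trans n.lt_succ_self⟩ ∈
        G.ends (W.edge ⟨i, i.lt_succ_self.trans hi⟩) := by
      rw [W.compat]
      exact Sym2.mem_mk_right _ _
    have hright : W.vtx ⟨i + 1, hi.trans n.lt_succ_self⟩ ∈ G.ends (W.edge ⟨i + 1, hi⟩) := by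
      rw [W.compat]
      exact Sym2.mem_mk_left _ _
    exact ⟨fun h => hB _ h _ hleft hdeg _ hright, fun h => hB _ h _ hright hdeg _ hleft⟩
  have hzero (i : ℕ) (hi : i < n) : W.edge ⟨0, i.zero_le.trans_lt hi⟩ ∈ B ↔ W.edge ⟨i, hi⟩ ∈ B := by
    induction i with
    | zero => exact Iff.rfl
    | succ i ih => exact (ih (i.lt_succ_self.trans hi)).trans (hsucc i hi)
  obtain ⟨i, rfl⟩ := hx
  rintro _ ⟨k, rfl⟩
  exact (hzero k k.2).1 ((hzero i i.2).2 hxB)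

theorem IsCircuit.mem_of_degree_eq_two (hC : G.IsCircuit C) (hloop : ∀ e ∈ C, ¬ (G.ends e).IsDiag)
    {x : G.V} (hx : ∃ e ∈ C, x ∈ G.ends e) (hdeg : G.degree x = 2) {y : G.E} (hy : x ∈ G.ends y) :
    y ∈ C := by
  have hsub : {e | e ∈ C ∧ x ∈ G.ends e} ⊆ {e | x ∈ G.ends e ∧ ¬ (G.ends e).IsDiag} :=
    fun e he => ⟨he.2, hloop e he.1⟩
  have hcard := hC.ncard_incident_eq_two hloop hx
  have hle := Set.ncard_le_ncard hsub
  have hsum : {e | x ∈ G.ends e ∧ ¬ (G.ends e).IsDiag}.ncard +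
      2 * {e | G.ends e = s(x, x)}.ncard = 2 := hdeg
  have hnoloop : {e | G.ends e = s(x, x)} = ∅ := (Set.ncard_eq_zero).1 (by omega)
  have hydiag : ¬ (G.ends y).IsDiag := by
    obtain ⟨z, hz⟩ := hy
    intro hdiag
    rw [hz, Sym2.mk_isDiag_iff] at hdiag
    exact (Set.eq_empty_iff_forall_notMem.1 hnoloop y) (hdiag ▸ hz)
  have hmem : y ∈ {e | e ∈ C ∧ x ∈ G.ends e} := by
    rw [Set.eq_of_subset_of_ncard_le hsub (by omega)]
    exact ⟨hy, hydiag⟩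
  exact hmem.1

theorem IsCircuit.le_ncard_of_isSegmentUnion (hC : G.IsCircuit C)
    (hloop : ∀ e ∈ C, ¬ (G.ends e).IsDiag) (hB : IsSegmentUnion C B) {n : ℕ} {W : G.Walk n}
    (hW : G.IsDeg2Path W) {x : G.E} (hxW : x ∈ Set.range W.edge) (hx : x ∈ B) : n ≤ B.ncard := by
  have hsub : Set.range W.edge ⊆ B := hW.range_edge_subset hxW hx fun b hb a ha hdeg y hy => by
    have hmem {z : G.E} (hz : a ∈ G.ends z) : z ∈ C :=
      hC.mem_of_degree_eq_two hloop ⟨b, hB.subset hb, ha⟩ hdeg hz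
    exact hB.closed b hb a ha (fun ⟨z, hzC, hz⟩ => hzC (hmem hz)) y (hmem hy) hy
  have hcard := Set.ncard_le_ncard hsub
  rwa [← Set.image_univ, Set.ncard_image_of_injective _ hW.2.1.2, Set.ncard_univ,
    Nat.card_fin] at hcard

section CyclicEnumeration

variable {n q : ℕ} {v : ℕ → G.V} {e : ℕ → G.E}

namespace IsCyclicEnumeration

theorem edge_mem (h : IsCyclicEnumeration C n v e) (i : ℕ) : e i ∈ C :=
  h.range_edge ▸ Set.mem_range_self i

theorem exists_lt_edge_eq (h : IsCyclicEnumeration C n v e) {y : G.E} (hy : y ∈ C) :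
    ∃ i < n, e i = y := by
  obtain ⟨i, rfl⟩ := h.range_edge.symm ▸ hy
  have hlt : i % n < n := Nat.mod_lt _ (zero_lt_one.trans h.one_lt)
  exact ⟨i % n, hlt, (h.edge_eq_iff _ _).2 (Nat.mod_modEq i n)⟩

theorem edge_eq_iff_of_lt (h : IsCyclicEnumeration C n v e) {i j : ℕ} (hi : i < n) (hj : j < n) :
    e i = e j ↔ i = j := by
  rw [h.edge_eq_iff]
  exact ⟨fun hij => hij.eq_of_lt_of_lt hi hj, fun hij => hij ▸ rfl⟩

theorem not_modEq_succ (h : IsCyclicEnumeration C n v e) (i : ℕ) : ¬ i ≡ i + 1 [MOD n] := fun hi =>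
  h.one_lt.ne' (Nat.dvd_one.1 (Nat.add_modEq_left_iff.1 hi.symm))

theorem mem_ends_succ_iff (h : IsCyclicEnumeration C n v e) {y : G.E} (hy : y ∈ C) (i : ℕ) :
    v (i + 1) ∈ G.ends y ↔ y = e i ∨ y = e (i + 1) := by
  obtain ⟨j, rfl⟩ := h.range_edge.symm ▸ hy
  rw [h.ends_edge, Sym2.mem_iff, h.vtx_eq_iff, h.vtx_eq_iff, h.edge_eq_iff, h.edge_eq_iff, or_comm,
    Nat.ModEq.comm (b := j), Nat.ModEq.comm (b := j + 1), Nat.ModEq.add_iff_right rfl]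

theorem mem_incidentEdges_succ_iff (h : IsCyclicEnumeration C n v e) {y : G.E} (hy : y ∈ C)
    (i : ℕ) : y ∈ G.incidentEdges (v (i + 1)) ↔ y = e i ∨ y = e (i + 1) := by
  rw [mem_incidentEdges, h.mem_ends_succ_iff hy, and_iff_left]
  obtain ⟨j, rfl⟩ := h.range_edge.symm ▸ hy
  rw [h.ends_edge, Sym2.mk_isDiag_iff, h.vtx_eq_iff]
  exact h.not_modEq_succ j

theorem boundary_succ {A : Type*} [AddCommMonoid A] (h : IsCyclicEnumeration C n v e)
    (u : G.E → A) (i : ℕ) :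
    G.boundary u (v (i + 1)) =
      u (e i) + u (e (i + 1)) + G.boundary (Cᶜ.indicator u) (v (i + 1)) := by
  conv_lhs => rw [← Set.indicator_self_add_compl C u, map_add, Pi.add_apply]
  congr 1
  have hne : e i ≠ e (i + 1) := fun he => h.not_modEq_succ i ((h.edge_eq_iff _ _).1 he)
  have hsub : {e i, e (i + 1)} ⊆ G.incidentEdges (v (i + 1)) := by
    simp only [Finset.insert_subset_iff, Finset.singleton_subset_iff,
      h.mem_incidentEdges_succ_iff (h.edge_mem _), true_or, or_true, and_self]
  rw [boundary_apply, ← Finset.sum_subset hsub, Finset.sum_pair hne,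
    Set.indicator_of_mem (h.edge_mem i), Set.indicator_of_mem (h.edge_mem (i + 1))]
  intro y hy hy'
  refine Set.indicator_of_notMem (fun hyC => hy' ?_) u
  rw [Finset.mem_insert, Finset.mem_singleton]
  exact (h.mem_incidentEdges_succ_iff hyC i).1 hy

theorem apply_edge_succ_eq (h : IsCyclicEnumeration C n v e) (hg : G.IsFlow g) {i : ℕ}
    (hi : ¬ G.IsBranch C (v (i + 1))) : g (e (i + 1)) = g (e i) := by
  have hbd := h.boundary_succ g i
  rw [isFlow_iff_boundary_eq_zero.1 hg, boundary_indicator_compl_of_not_isBranch hi, add_zero,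
    Pi.zero_apply] at hbd
  exact (CharTwo.add_eq_zero.1 hbd.symm).symm

theorem exists_lt_vtx_eq (h : IsCyclicEnumeration C n v e) {x : G.V} {y : G.E} (hy : y ∈ C)
    (hx : x ∈ G.ends y) : ∃ k < n, v k = x := by
  obtain ⟨j, rfl⟩ : ∃ j, v j = x := by
    obtain ⟨i, rfl⟩ := h.range_edge.symm ▸ hy
    rw [h.ends_edge, Sym2.mem_iff] at hx
    rcases hx with rfl | rfl
    exacts [⟨i, rfl⟩, ⟨i + 1, rfl⟩]
  have hlt : j % n < n := Nat.mod_lt _ (zero_lt_one.trans h.one_lt)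
  exact ⟨j % n, hlt, (h.vtx_eq_iff _ _).2 (Nat.mod_modEq j n)⟩

theorem vtx_period (h : IsCyclicEnumeration C n v e) : v n = v 0 :=
  (h.vtx_eq_iff _ _).2 (Nat.modEq_zero_iff_dvd.2 dvd_rfl)

theorem injOn_range (h : IsCyclicEnumeration C n v e) : Set.InjOn e (Finset.range n) :=
  fun _ hi _ hj => (h.edge_eq_iff_of_lt (Finset.mem_range.1 hi) (Finset.mem_range.1 hj)).1

theorem ncard_setOf (h : IsCyclicEnumeration C n v e) (P : G.E → Prop)
    [DecidablePred fun i => P (e i)] :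
    {y ∈ C | P y}.ncard = ((Finset.range n).filter fun i => P (e i)).card := by
  have himage : {y ∈ C | P y} = e '' ((Finset.range n).filter fun i => P (e i)) := by
    ext y
    constructor
    · rintro ⟨hy, hP⟩
      obtain ⟨i, hi, rfl⟩ := h.exists_lt_edge_eq hy
      exact ⟨i, Finset.mem_filter.2 ⟨Finset.mem_range.2 hi, hP⟩, rfl⟩
    · rintro ⟨i, hi, rfl⟩
      exact ⟨h.edge_mem i, (Finset.mem_filter.1 hi).2⟩
  rw [himage, Set.InjOn.ncard_image (h.injOn_range.mono (Finset.filter_subset _ _)),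
    Set.ncard_coe_finset]

theorem ncard_eq (h : IsCyclicEnumeration C n v e) : C.ncard = n := by
  simpa using h.ncard_setOf fun _ => True

theorem isSegmentUnion_image (h : IsCyclicEnumeration C n v e) {i k : ℕ}
    (hi : G.IsBranch C (v i)) (hk : G.IsBranch C (v k)) :
    IsSegmentUnion C (e '' Set.Ico i k) := by
  refine ⟨Set.image_subset_iff.2 fun m _ => h.edge_mem m, ?_⟩
  rintro _ ⟨m, ⟨him, hmk⟩, rfl⟩ x hx hbranch y hy hxy
  obtain ⟨s, his, hsk, rfl⟩ : ∃ s, i ≤ s ∧ s + 1 < k ∧ v (s + 1) = x := by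
    rw [h.ends_edge, Sym2.mem_iff] at hx
    rcases hx with rfl | rfl
    · have hne : i ≠ m := fun him => hbranch (him ▸ hi)
      obtain ⟨s, rfl⟩ := Nat.exists_eq_succ_of_ne_zero (Nat.ne_zero_of_lt (him.lt_of_ne hne))
      exact ⟨s, by omega, hmk, rfl⟩
    · exact ⟨m, him, lt_of_le_of_ne hmk fun hmk => hbranch (hmk ▸ hk), rfl⟩
  rcases (h.mem_ends_succ_iff hy s).1 hxy with rfl | rfl
  exacts [⟨s, ⟨his, s.lt_succ_self.trans hsk⟩, rfl⟩, ⟨s + 1, ⟨his.trans s.le_succ, hsk⟩, rfl⟩]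

theorem add_le_of_isBranch (h : IsCyclicEnumeration C n v e)
    (hlong : ∀ B, B.Nonempty → IsSegmentUnion C B → q ≤ B.ncard) {i k : ℕ} (hik : i < k)
    (hi : G.IsBranch C (v i)) (hk : G.IsBranch C (v k)) : i + q ≤ k := by
  have hq := hlong (e '' Set.Ico i k) ((Set.nonempty_Ico.2 hik).image e)
    (h.isSegmentUnion_image hi hk)
  have hle := Set.ncard_image_le (f := e) (Set.finite_Ico i k)
  rw [← Finset.coe_Ico, Set.ncard_coe_finset, Nat.card_Ico, Finset.coe_Ico] at hle
  omega

theorem add_le_and_not_isBranch (h : IsCyclicEnumeration C n v e)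
    (hlong : ∀ B, B.Nonempty → IsSegmentUnion C B → q ≤ B.ncard)
    (hstart : G.IsBranch C (v 0) ∨ ∀ i, ¬ G.IsBranch C (v i)) {k : ℕ} (hk : k < n)
    (hbranch : k = 0 ∨ G.IsBranch C (v k)) :
    k + q ≤ n ∧ ∀ m, k < m → m < k + q → ¬ G.IsBranch C (v m) := by
  rcases hstart with h0 | hnone
  · have hvk : G.IsBranch C (v k) := hbranch.elim (fun hk0 => hk0 ▸ h0) id
    exact ⟨h.add_le_of_isBranch hlong hk hvk (h.vtx_period ▸ h0), fun m hkm hmq hm =>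
      hmq.not_ge (h.add_le_of_isBranch hlong hkm hvk hm)⟩
  · have hqn := hlong C ⟨e 0, h.edge_mem 0⟩ (isSegmentUnion_self C)
    rw [h.ncard_eq] at hqn
    obtain rfl := hbranch.resolve_right (hnone k)
    exact ⟨by rwa [zero_add], fun m _ _ => hnone m⟩

end IsCyclicEnumeration

theorem IsCircuit.exists_isCyclicEnumeration_isBranch (hC : G.IsCircuit C)
    (hloop : ∀ e ∈ C, ¬ (G.ends e).IsDiag) :
    ∃ n v e, IsCyclicEnumeration C n v e ∧
      (G.IsBranch C (v 0) ∨ ∀ i, ¬ G.IsBranch C (v i)) := by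
  by_cases hbranch : ∃ x, (∃ y ∈ C, x ∈ G.ends y) ∧ G.IsBranch C x
  · obtain ⟨x, hx, hxC⟩ := hbranch
    obtain ⟨n, v, e, h, rfl⟩ := hC.exists_isCyclicEnumeration hloop hx
    exact ⟨n, v, e, h, .inl hxC⟩
  · obtain ⟨y, hy⟩ := hC.1
    obtain ⟨n, v, e, h, -⟩ := hC.exists_isCyclicEnumeration hloop ⟨y, hy, Sym2.out_fst_mem _⟩
    refine ⟨n, v, e, h, .inr fun i hi => hbranch ⟨v i, ⟨e i, h.edge_mem i, ?_⟩, hi⟩⟩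
    rw [h.ends_edge]
    exact Sym2.mem_mk_left _ _

/-! ### Rerouting a flow -/

/-- The indicator of the trail `e p, …, e (r - 1)`, as a `1`-chain modulo two. -/
noncomputable def arc (e : ℕ → G.E) (p r : ℕ) : G.E → ZMod 2 :=
  ∑ i ∈ Finset.Ico p r, Pi.single (e i) 1

theorem boundary_arc {v : ℕ → G.V} {e : ℕ → G.E} (hends : ∀ i, G.ends (e i) = s(v i, v (i + 1)))
    {p r : ℕ} (hpr : p ≤ r) :
    G.boundary (arc e p r) = Pi.single (v p) 1 + Pi.single (v r) 1 := by
  induction r, hpr using Nat.le_induction with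
  | base => rw [arc, Finset.Ico_self, Finset.sum_empty, map_zero, ZModModule.add_self]
  | succ r hpr ih =>
    rw [arc, Finset.sum_Ico_succ_top hpr, map_add, ← arc, ih, boundary_single (hends r),
      ZModModule.add_add_add_cancel]

theorem arc_apply (e : ℕ → G.E) (p r : ℕ) (y : G.E) :
    arc e p r y = ∑ i ∈ Finset.Ico p r, if y = e i then 1 else 0 := by
  simp only [arc, Finset.sum_apply, Pi.single_apply]

/-- `g` is a flow with the same support as `f` outside `C`. -/
structure IsRerouting (C : Set G.E) (f g : G.E → ZMod 2 × ZMod 2) : Prop where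
  isFlow : G.IsFlow g
  supp_sdiff : G.supp f \ C = G.supp g \ C

theorem IsRerouting.add_smul (hg : IsRerouting C f g) {t : G.E → ZMod 2} {c : ZMod 2 × ZMod 2}
    (ht : G.boundary t = 0) (hne : ∀ y ∉ C, t y ≠ 0 → g y ≠ 0 ∧ g y + c ≠ 0) :
    IsRerouting C f (g + fun y => t y • c) := by
  refine ⟨hg.isFlow.add_smul ht c, hg.supp_sdiff.trans (Set.ext fun y => and_congr_left ?_)⟩
  intro hy
  change g y ≠ 0 ↔ g y + t y • c ≠ 0
  by_cases hty : t y = 0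
  · rw [hty, zero_smul, add_zero]
  · obtain ⟨hgy, hgyc⟩ := hne y hy hty
    have hone : t y = 1 := Fin.eq_one_of_ne_zero _ hty
    rw [hone, one_smul]
    exact iff_of_true hgy hgyc

/-- `t` is the indicator of a trail from `x` to `y` outside `C` to which `c` can be added without
changing the support of `g`. -/
structure IsBypass (C : Set G.E) (g : G.E → ZMod 2 × ZMod 2) (c : ZMod 2 × ZMod 2) (x y : G.V)
    (t : G.E → ZMod 2) : Prop where
  apply_of_mem : ∀ z ∈ C, t z = 0
  boundary_eq : G.boundary t = Pi.single x 1 + Pi.single y 1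
  ne_zero : ∀ z, t z ≠ 0 → g z ≠ 0 ∧ g z + c ≠ 0

namespace IsBypass

variable {c : ZMod 2 × ZMod 2} {x y : G.V} {t : G.E → ZMod 2}

theorem refl (C : Set G.E) (g : G.E → ZMod 2 × ZMod 2) (c : ZMod 2 × ZMod 2) (x : G.V) :
    IsBypass C g c x x 0 :=
  ⟨fun _ _ => rfl, by rw [map_zero, ZModModule.add_self], fun _ h => absurd rfl h⟩

theorem symm (ht : IsBypass C g c x y t) : IsBypass C g c y x t :=
  ⟨ht.apply_of_mem, ht.boundary_eq.trans (add_comm _ _), ht.ne_zero⟩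

theorem isBranch_left (ht : IsBypass C g c x y t) (hxy : x ≠ y) : G.IsBranch C x := by
  by_contra hx
  have hind : Cᶜ.indicator t = t := by
    rw [Set.indicator_eq_self]
    exact fun z hz hzC => hz (ht.apply_of_mem z hzC)
  have hbd := boundary_indicator_compl_of_not_isBranch hx t
  rw [hind, ht.boundary_eq, Pi.add_apply, Pi.single_eq_same, Pi.single_eq_of_ne hxy,
    add_zero] at hbd
  exact one_ne_zero hbd

end IsBypass

theorem exists_addMonoidHom_eq_zero_eq_one {d : ZMod 2 × ZMod 2} (hd : d.1 = 1) :
    ∃ c : ZMod 2 × ZMod 2, c.1 = 1 ∧ ∃ φ : ZMod 2 × ZMod 2 →+ ZMod 2, φ c = 0 ∧ φ d = 1 := by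
  refine ⟨(1, d.2 + 1), rfl, AddMonoidHom.snd _ _ +
    (AddMonoidHom.mulLeft (d.2 + 1)).comp (AddMonoidHom.fst _ _), ?_, ?_⟩
  · simp [CharTwo.add_self_eq_zero]
  · simp [hd, ← add_assoc, CharTwo.add_self_eq_zero]

namespace IsCyclicEnumeration

theorem arc_apply_of_notMem (h : IsCyclicEnumeration C n v e) (p r : ℕ) {y : G.E} (hy : y ∉ C) :
    arc e p r y = 0 := by
  rw [arc_apply]
  exact Finset.sum_eq_zero fun i _ => if_neg fun hi : y = e i => hy (hi ▸ h.edge_mem i)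

theorem arc_apply_edge (h : IsCyclicEnumeration C n v e) {p r i : ℕ} (hr : r ≤ n) (hi : i < n) :
    arc e p r (e i) = if i ∈ Finset.Ico p r then 1 else 0 := by
  rw [arc_apply, ← Finset.sum_ite_eq (Finset.Ico p r) i fun _ => (1 : ZMod 2)]
  refine Finset.sum_congr rfl fun j hj => if_congr (h.edge_eq_iff_of_lt hi ?_) rfl rfl
  exact (Finset.mem_Ico.1 hj).2.trans_le hr

/-- The chain `φ ∘ g` has zero boundary, so its part outside `C` has a nonzero boundary at
`v (i + 1)`, hence at some other vertex of the same component too; that vertex must lie on `C`. -/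
theorem exists_isBypass (h : IsCyclicEnumeration C n v e) (hg : G.IsFlow g) {i : ℕ}
    (hi : (g (e i)).1 ≠ (g (e (i + 1))).1) :
    ∃ c : ZMod 2 × ZMod 2, c.1 = 1 ∧ ∃ k < n, v k ≠ v (i + 1) ∧
      ∃ t, IsBypass C g c (v (i + 1)) (v k) t := by
  have hd : (g (e i) + g (e (i + 1))).1 = 1 :=
    Fin.eq_one_of_ne_zero _ fun h0 => hi (CharTwo.add_eq_zero.1 h0)
  obtain ⟨c, hc, φ, hφc, hφd⟩ := exists_addMonoidHom_eq_zero_eq_one hd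
  let w : G.E → ZMod 2 := Cᶜ.indicator (φ ∘ g)
  have hbd (x : G.V) : G.boundary (φ ∘ g) x = 0 := by
    rw [boundary_comp, isFlow_iff_boundary_eq_zero.1 hg, Pi.zero_apply, map_zero]
  have hstart : G.boundary w (v (i + 1)) ≠ 0 := by
    intro h0
    have hsum := h.boundary_succ (φ ∘ g) i
    rw [hbd, h0, Function.comp_apply, Function.comp_apply, ← map_add, hφd, add_zero] at hsum
    exact zero_ne_one hsum
  obtain ⟨x, hne, hreach, hx⟩ := exists_reaches_boundary_ne_zero hstart
  obtain ⟨y, hy, hxy⟩ : ∃ y ∈ C, x ∈ G.ends y := by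
    by_contra! hoff
    exact hx ((boundary_indicator_compl_of_forall_notMem hoff _).trans (hbd x))
  obtain ⟨k, hk, rfl⟩ := h.exists_lt_vtx_eq hy hxy
  obtain ⟨t, ht, htbd⟩ := hreach.exists_boundary_eq
  have hw (z : G.E) (hz : t z ≠ 0) : z ∉ C ∧ φ (g z) ≠ 0 :=
    Set.indicator_apply_ne_zero.1 (by_contra fun hwz => hz (ht z hwz))
  refine ⟨c, hc, k, hk, hne, t, fun z hz => by_contra fun htz => (hw z htz).1 hz, htbd, fun z hz =>
    ⟨fun h0 => (hw z hz).2 (by rw [h0, map_zero]), fun h0 => (hw z hz).2 ?_⟩⟩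
  simpa only [map_add, hφc, add_zero, map_zero] using congrArg φ h0

theorem exists_isRerouting_of_isBypass (h : IsCyclicEnumeration C n v e) (hg : IsRerouting C f g)
    {c : ZMod 2 × ZMod 2} {p r : ℕ} (hpr : p ≤ r) (hr : r ≤ n) {t : G.E → ZMod 2}
    (ht : IsBypass C g c (v p) (v r) t) :
    ∃ g', IsRerouting C f g' ∧
      ∀ i < n, g' (e i) = if i ∈ Finset.Ico p r then g (e i) + c else g (e i) := by
  refine ⟨_, hg.add_smul (t := t + arc e p r) (c := c) ?_ fun y hy hty => ?_, fun i hi => ?_⟩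
  · rw [map_add, ht.boundary_eq, boundary_arc h.ends_edge hpr, ZModModule.add_self]
  · rw [Pi.add_apply, h.arc_apply_of_notMem p r hy, add_zero] at hty
    exact ht.ne_zero y hty
  · rw [Pi.add_apply, Pi.add_apply, ht.apply_of_mem _ (h.edge_mem i), zero_add,
      h.arc_apply_edge hr hi, ite_smul, one_smul, zero_smul, add_ite, add_zero]

theorem exists_isRerouting_add (h : IsCyclicEnumeration C n v e) (hg : IsRerouting C f g)
    (c : ZMod 2 × ZMod 2) : ∃ g', IsRerouting C f g' ∧ ∀ i < n, g' (e i) = g (e i) + c := by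
  have ht : IsBypass C g c (v 0) (v n) 0 := h.vtx_period ▸ IsBypass.refl C g c (v n)
  obtain ⟨g', hg', heq⟩ := h.exists_isRerouting_of_isBypass hg n.zero_le le_rfl ht
  exact ⟨g', hg', fun i hi => by rw [heq i hi, if_pos (Finset.mem_Ico.2 ⟨i.zero_le, hi⟩)]⟩

theorem exists_isRerouting_signSum_flip (h : IsCyclicEnumeration C n v e) (hg : IsRerouting C f g)
    {c : ZMod 2 × ZMod 2} (hc : c.1 = 1) {p r : ℕ} (hpr : p ≤ r) (hr : r ≤ n) {t : G.E → ZMod 2}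
    (ht : IsBypass C g c (v p) (v r) t) :
    ∃ g', IsRerouting C f g' ∧ ∀ k, p ≤ k → k ≤ n → signSum (g' ∘ e) k =
      signSum (g ∘ e) k - 2 * (signSum (g ∘ e) (min k r) - signSum (g ∘ e) p) := by
  obtain ⟨g', hg', heq⟩ := h.exists_isRerouting_of_isBypass hg hpr hr ht
  exact ⟨g', hg', fun k hpk hk => signSum_flip hc hpr hpk fun i hi => heq i (hi.trans_le hk)⟩

/-! ### An extremal rerouting -/

theorem signSum_add_of_not_isBranch (h : IsCyclicEnumeration C n v e) (hg : G.IsFlow g) {k : ℕ}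
    (hno : ∀ m, k < m → m < k + q → ¬ G.IsBranch C (v m)) :
    signSum (g ∘ e) (k + q) = signSum (g ∘ e) k + q * firstSign (g (e k)) := by
  refine signSum_add_of_eq fun i hi => ?_
  induction i with
  | zero => rfl
  | succ i ih =>
    exact (h.apply_edge_succ_eq hg (hno (k + i + 1) (by omega) (by omega))).trans
      (ih (i.lt_succ_self.trans hi))

theorem exists_isRerouting_forall_signSum_le (n : ℕ) (e : ℕ → G.E) (hf : G.IsFlow f) :
    ∃ g, IsRerouting C f g ∧ ∃ j ≤ n, ∀ g', IsRerouting C f g' → ∀ k ≤ n,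
      signSum (g' ∘ e) k ≤ signSum (g ∘ e) j := by
  have hfin : ({g | IsRerouting C f g} ×ˢ Set.Iic n).Finite :=
    (Set.toFinite _).prod (Set.finite_Iic n)
  obtain ⟨⟨g, j⟩, ⟨hg, hj⟩, hmax⟩ := Set.exists_max_image _
    (fun x : (G.E → ZMod 2 × ZMod 2) × ℕ => signSum (x.1 ∘ e) x.2) hfin
    ⟨(f, n), ⟨hf, rfl⟩, Set.mem_Iic.2 le_rfl⟩
  exact ⟨g, hg, j, hj, fun g' hg' k hk => hmax (g', k) ⟨hg', hk⟩⟩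

theorem le_of_forall_signSum_le (h : IsCyclicEnumeration C n v e) (hg : IsRerouting C f g)
    (hqn : q ≤ n) (hno : ∀ m, 0 < m → m < q → ¬ G.IsBranch C (v m)) {M : ℤ}
    (hM : ∀ g', IsRerouting C f g' → ∀ k ≤ n, signSum (g' ∘ e) k ≤ M) : q ≤ M := by
  have hrun : signSum (g ∘ e) q = q * firstSign (g (e 0)) := by
    have hadd := h.signSum_add_of_not_isBranch (q := q) hg.isFlow (k := 0) (by simpa using hno)
    rwa [zero_add, signSum_zero, zero_add] at hadd
  rcases firstSign_eq_one_or (g (e 0)) with hs | hs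
  · exact (by rw [hrun, hs, mul_one] : signSum (g ∘ e) q = q) ▸ hM g hg q hqn
  · have ht : IsBypass C g (1, 0) (v 0) (v n) 0 := h.vtx_period ▸ IsBypass.refl C g _ (v n)
    obtain ⟨g', hg', hflip⟩ := h.exists_isRerouting_signSum_flip hg rfl n.zero_le le_rfl ht
    have hq := hM g' hg' q hqn
    rw [hflip q q.zero_le hqn, min_eq_left hqn, hrun, hs, signSum_zero] at hq
    linarith

/-- Take `g` and `j` with `signSum (g ∘ e) j` as large as possible. If the sign changes at `j`, then
a bypass leads from `v j` to some `v k`, and the arc of `C` between them can be flipped. For `j < k`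
this would increase the sum at `j + 1`. For `k < j` it changes the total by twice the sum over the
arc, which is at least `q` because the run at `k`, once flipped if necessary, counts positively. -/
theorem exists_le_abs_signSum (h : IsCyclicEnumeration C n v e) (hf : G.IsFlow f)
    (hrun : ∀ k < n, k = 0 ∨ G.IsBranch C (v k) →
      k + q ≤ n ∧ ∀ m, k < m → m < k + q → ¬ G.IsBranch C (v m)) :
    ∃ g, IsRerouting C f g ∧ (q : ℤ) ≤ |signSum (g ∘ e) n| := by
  obtain ⟨g, hg, j, hj, hmax⟩ := exists_isRerouting_forall_signSum_le (C := C) n e hf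
  have hq : (q : ℤ) ≤ signSum (g ∘ e) j := by
    obtain ⟨hqn, hno⟩ := hrun 0 (zero_lt_one.trans h.one_lt) (.inl rfl)
    rw [zero_add] at hqn hno
    exact h.le_of_forall_signSum_le hg hqn hno hmax
  obtain rfl | hjn := hj.eq_or_lt
  · exact ⟨g, hg, hq.trans (le_abs_self _)⟩
  obtain _ | i := j
  · exact ⟨g, hg, hq.trans ((signSum_zero _).trans_le (abs_nonneg _))⟩
  have hnext := hmax g hg (i + 1 + 1) hjn
  obtain ⟨c, hc, k, hk, hne, t, ht⟩ := h.exists_isBypass hg.isFlow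
    (fst_ne_fst_of_signSum_le (hmax g hg i (i.le_succ.trans hj)) hnext)
  rcases lt_trichotomy k (i + 1) with hki | rfl | hik
  · obtain ⟨g', hg', hflip⟩ := h.exists_isRerouting_signSum_flip hg hc hki.le hj ht.symm
    obtain ⟨hkn, hno⟩ := hrun k hk (.inr (ht.symm.isBranch_left hne))
    have hkq : k + q ≤ i + 1 :=
      not_lt.1 fun hlt => hno (i + 1) hki hlt (ht.isBranch_left hne.symm)
    have hgain : signSum (g ∘ e) k + q ≤ signSum (g ∘ e) (i + 1) := by
      have hle := hmax g hg (k + q) hkn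
      have hle' := hmax g' hg' (k + q) hkn
      rw [hflip _ (k.le_add_right q) hkn, min_eq_left hkq] at hle'
      have hadd := h.signSum_add_of_not_isBranch hg.isFlow hno
      rcases firstSign_eq_one_or (g (e k)) with hs | hs <;> rw [hs] at hadd <;> linarith
    have htotal := hflip n hk.le le_rfl
    rw [min_eq_right hj] at htotal
    by_contra! hlt
    have habs := abs_lt.1 (hlt g hg)
    have habs' := abs_lt.1 (hlt g' hg')
    omega
  · exact absurd rfl hne
  · obtain ⟨g', hg', hflip⟩ := h.exists_isRerouting_signSum_flip hg hc hik.le hk.le ht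
    have hup := hmax g' hg' (i + 1 + 1) hjn
    rw [hflip (i + 1 + 1) (Nat.le_succ _) hjn, min_eq_left (show i + 1 + 1 ≤ k from hik)] at hup
    exact absurd (by omega) (signSum_succ_ne (g ∘ e) (i + 1))

theorem exists_isRerouting_ncard_le (h : IsCyclicEnumeration C n v e) (hg : IsRerouting C f g)
    (hq : (q : ℤ) ≤ |signSum (g ∘ e) n|) :
    ∃ g', IsRerouting C f g' ∧ 4 * {y ∈ C | g' y = 0}.ncard + q ≤ C.ncard := by
  obtain ⟨z, hz⟩ := exists_four_mul_card_filter_add_le (Finset.range n) (g ∘ e) hq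
  obtain ⟨g', hg', hadd⟩ := h.exists_isRerouting_add hg z
  have hzero : ((Finset.range n).filter fun i => g' (e i) = 0) =
      (Finset.range n).filter fun i => (g ∘ e) i = z :=
    Finset.filter_congr fun i hi => by
      rw [hadd i (Finset.mem_range.1 hi), CharTwo.add_eq_zero, Function.comp_apply]
  refine ⟨g', hg', ?_⟩
  rw [Finset.card_range] at hz
  rwa [h.ncard_setOf fun y => g' y = 0, hzero, h.ncard_eq]

end IsCyclicEnumeration

end CyclicEnumeration

end Multigraph

open Multigraph in
/-- Lemma 2.1.  If `C` is a circuit of `G`, each edge of `C`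
lies on a thread of `G` of length at least `q`, and `f` is a `ℤ₂×ℤ₂`-flow on
`G`, then there is a `ℤ₂×ℤ₂`-flow `g` on `G` with
`supp f − E(C) = supp g − E(C)` and `|E_{g=(0,0)}(C)| ≤ (|E(C)| − q)/4`. -/
theorem circuit_flow_zero_edges (G : Multigraph) (C : Set G.E) (q : ℕ)
    (hC : G.IsCircuit C)
    (hthread : ∀ e ∈ C, ∃ n : ℕ, q ≤ n ∧ ∃ W : G.Walk n,
      G.IsThread W ∧ e ∈ Set.range W.edge)
    (f : G.E → ZMod 2 × ZMod 2) (hf : G.IsFlow f) :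
    ∃ g : G.E → ZMod 2 × ZMod 2, G.IsFlow g ∧
      G.supp f \ C = G.supp g \ C ∧
      ({e ∈ C | g e = (0, 0)}.ncard : ℝ) ≤ (1 / 4) * ((C.ncard : ℝ) - (q : ℝ)) := by
  have hloop (y : G.E) (hy : y ∈ C) : ¬ (G.ends y).IsDiag := by
    obtain ⟨_, _, W, hW, hyW⟩ := hthread y hy
    exact hW.1.not_isDiag hyW
  have hlong (B : Set G.E) (hB : B.Nonempty) (hBC : IsSegmentUnion C B) : q ≤ B.ncard := by
    obtain ⟨y, hy⟩ := hB
    obtain ⟨m, hqm, W, hW, hyW⟩ := hthread y (hBC.subset hy)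
    exact hqm.trans (hC.le_ncard_of_isSegmentUnion hloop hBC hW.1 hyW hy)
  obtain ⟨n, v, e, henum, hstart⟩ := hC.exists_isCyclicEnumeration_isBranch hloop
  obtain ⟨g, hg, hq⟩ := henum.exists_le_abs_signSum hf fun k hk hbranch =>
    henum.add_le_and_not_isBranch hlong hstart hk hbranch
  obtain ⟨g', hg', hcard⟩ := henum.exists_isRerouting_ncard_le hg hq
  refine ⟨g', hg'.isFlow, hg'.supp_sdiff, ?_⟩
  have hreal : 4 * ({y ∈ C | g' y = (0, 0)}.ncard : ℝ) + q ≤ C.ncard := by exact_mod_cast hcard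
  linarith
end

section
/- Let G be a graph and C a circuit in G. If the contracted graph G/C admits a nowhere-zero Z2×Z2-flow, then G admits a Z2×Z2-flow f such that E(G) − E(C) ⊆ supp(f) and |E_{f=(0,0)}(C)| < (1/4)|E(C)|. -/
/-!
A flow of `G/C` lifts to a flow of `G` that is nonzero off `C`: the boundary of an arbitrary lift
sums to zero over each connected piece of `C`, so it is cancelled along paths in `C`.

Traversing `C`, the first coordinate of a flow `f` becomes a walk on `ℤ` that goes up on the values
`(0, *)` and down on the values `(1, *)`. If some flow that is nonzero off `C` has a walk ending at
a height other than `0`, then its four values are not equally distributed on `C`, so one of them is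
taken by fewer than a quarter of the edges; adding that value along `C` turns it into `(0, 0)`.

Suppose instead that all walks end at height `0`, and choose a flow and a position `j` on `C` at
which the height is as large as possible. Let `s = (1, y)` be the sum of the two values meeting at
the peak `j`, and put `a = (1, y + 1)`. The edges off `C` with values other than `a` contain a Kempe
chain from `j` to another vertex `k` of `C`. Adding `a` along this chain and along one of the two
arcs of `C` between `j` and `k` gives a flow, still nonzero off `C`, whose walk is reflected between
`j` and `k`. Both walks end at height `0`, so `k` also has maximal height, and the reflected walk
exceeds the maximum right next to `j`, a contradiction.
-/

namespace Multigraph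

variable {G : Multigraph} {M N : Type*} [AddCommGroup M] [Module (ZMod 2) M]
  [AddCommGroup N] [Module (ZMod 2) N]

/-! ### Boundaries -/

noncomputable instance inst_s1 : Fintype G.V := Fintype.ofFinite _

noncomputable instance inst_s1_2 : Fintype G.E := Fintype.ofFinite _

noncomputable instance inst_s1_3 : DecidableEq G.V := Classical.decEq _

noncomputable instance inst_s1_4 : DecidableEq G.E := Classical.decEq _

open scoped Classical in
/-- The incidence vector over `ℤ₂` of an edge; that of a loop is zero. -/
noncomputable def inc (e : G.E) (v : G.V) : ZMod 2 :=
  if v ∈ G.ends e ∧ ¬ (G.ends e).IsDiag then 1 else 0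

/-- The boundary of an edge chain with coefficients in an elementary abelian `2`-group `M`.
Its kernel consists of the `M`-flows. -/
noncomputable def bd : (G.E → M) →ₗ[ZMod 2] (G.V → M) where
  toFun f v := ∑ e, inc e v • f e
  map_add' f g := by ext v; simp [smul_add, Finset.sum_add_distrib]
  map_smul' c f := by ext v; simp [Finset.smul_sum, smul_comm c]

theorem bd_apply (f : G.E → M) (v : G.V) : bd f v = ∑ e, inc e v • f e := rfl

theorem bd_comp (φ : M →ₗ[ZMod 2] N) (f : G.E → M) (v : G.V) :
    bd (fun e => φ (f e)) v = φ (bd f v) := by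
  simp [bd_apply]

theorem bd_smul_const (p : G.E → ZMod 2) (m : M) (v : G.V) :
    bd (fun e => p e • m) v = bd p v • m :=
  bd_comp (LinearMap.toSpanSingleton (ZMod 2) M m) p v

theorem bd_apply_eq_zero {f : G.E → M} {v : G.V} (h : ∀ e, v ∈ G.ends e → f e = 0) :
    bd f v = 0 := by
  refine Finset.sum_eq_zero fun e _ => ?_
  by_cases hv : v ∈ G.ends e
  · simp [h e hv]
  · simp [inc, hv]

theorem inc_of_ends_eq {e : G.E} {a b : G.V} (h : G.ends e = s(a, b)) :
    inc e = Pi.single a 1 + Pi.single b 1 := by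
  ext v
  obtain rfl | hab := eq_or_ne a b
  · simp [inc, h, CharTwo.add_self_eq_zero]
  · obtain rfl | hva := eq_or_ne v a
    · simp [inc, h, hab]
    · obtain rfl | hvb := eq_or_ne v b <;> simp [inc, *]

theorem exists_ends_eq (e : G.E) : ∃ a b, G.ends e = s(a, b) :=
  Sym2.exists.1 ⟨G.ends e, rfl⟩

theorem bd_single {e : G.E} {a b : G.V} (h : G.ends e = s(a, b)) :
    bd (Pi.single e (1 : ZMod 2)) = Pi.single a 1 + Pi.single b 1 := by
  rw [← inc_of_ends_eq h]
  ext v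
  simp [bd_apply, Pi.single_apply]

theorem isFlow_iff_bd_eq_zero (f : G.E → ZMod 2 × ZMod 2) : G.IsFlow f ↔ bd f = 0 := by
  classical
  refine (forall_congr' fun v => ?_).trans funext_iff.symm
  rw [finsum_mem_def, finsum_eq_sum_of_fintype]
  simp [Set.indicator_apply, bd_apply, inc]

theorem sum_bd_eq_zero {f : G.E → M} {R : Finset G.V}
    (hR : ∀ e a b, f e ≠ 0 → G.ends e = s(a, b) → (a ∈ R ↔ b ∈ R)) :
    ∑ v ∈ R, bd f v = 0 := by
  simp_rw [bd_apply]
  rw [Finset.sum_comm]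
  refine Finset.sum_eq_zero fun e _ => ?_
  rw [← Finset.sum_smul]
  by_cases hf : f e = 0
  · simp [hf]
  obtain ⟨a, b, hab⟩ := exists_ends_eq e
  simp [inc_of_ends_eq hab, Finset.sum_add_distrib, Finset.sum_pi_single', hR e a b hf hab,
    CharTwo.add_self_eq_zero]

theorem exists_reaches_of_bd_ne_zero {f : G.E → M} {j : G.V} (hj : bd f j ≠ 0) :
    ∃ k ≠ j, G.Reaches (Function.support f) j k ∧ bd f k ≠ 0 := by
  classical
  by_contra! hcon
  let R : Finset G.V := {v | G.Reaches (Function.support f) j v}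
  have hsum : ∑ v ∈ R, bd f v = 0 := sum_bd_eq_zero fun e a b hfe hab => by
    simp only [R, Finset.mem_filter, Finset.mem_univ, true_and]
    exact ⟨fun h => h.tail ⟨e, hfe, hab⟩, fun h => h.tail ⟨e, hfe, hab.trans Sym2.eq_swap⟩⟩
  refine hj ?_
  rwa [Finset.sum_eq_single_of_mem j (by simp [Reaches, Relation.ReflTransGen.refl])
    fun v hv hvj => hcon v hvj (Finset.mem_filter.1 hv).2] at hsum

theorem Reaches.symm {S : Set G.E} {u w : G.V} (h : G.Reaches S u w) : G.Reaches S w u :=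
  have : Std.Symm fun a b => ∃ e ∈ S, G.ends e = s(a, b) :=
    ⟨fun _ _ ⟨e, he, hends⟩ => ⟨e, he, hends.trans Sym2.eq_swap⟩⟩
  Std.Symm.symm (r := Relation.ReflTransGen _) _ _ h

theorem Reaches.exists_bd_eq {S : Set G.E} {u w : G.V} (h : G.Reaches S u w) :
    ∃ K : G.E → ZMod 2, (∀ e ∉ S, K e = 0) ∧ bd K = Pi.single u 1 + Pi.single w 1 := by
  induction h with
  | refl => exact ⟨0, fun _ _ => rfl, by rw [map_zero, ZModModule.add_self]⟩
  | tail _ hbc ih =>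
    obtain ⟨K, hK, hbd⟩ := ih
    obtain ⟨e, he, hends⟩ := hbc
    refine ⟨K + Pi.single e 1, fun e' he' => ?_, ?_⟩
    · simp [hK e' he', ne_of_mem_of_not_mem he he' |>.symm]
    · rw [map_add, hbd, bd_single hends, ZModModule.add_add_add_cancel]

/-! ### Contraction -/

/-- The vertex of `G/C` to which a vertex of `G` is contracted. -/
def contractVtx (C : Set G.E) : G.V → (G.contract C).V := Quot.mk _

theorem contract_ends (C : Set G.E) {e : (G.contract C).E} {a b : G.V} (h : G.ends e.1 = s(a, b)) :
    (G.contract C).ends e = s(contractVtx C a, contractVtx C b) :=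
  congrArg (Sym2.map _) h

theorem contractVtx_eq_of_mem {C : Set G.E} {e : G.E} {a b : G.V} (he : e ∈ C)
    (h : G.ends e = s(a, b)) : contractVtx C a = contractVtx C b :=
  Quot.sound ⟨e, he, h⟩

theorem reaches_of_contractVtx_eq {C : Set G.E} {u w : G.V}
    (h : contractVtx C u = contractVtx C w) : G.Reaches C u w := by
  have hgen := Quot.eqvGen_exact h
  clear h
  induction hgen with
  | rel _ _ h => exact .single h
  | refl => exact .refl
  | symm _ _ _ ih => exact ih.symm
  | trans _ _ _ _ _ ih₁ ih₂ => exact ih₁.trans ih₂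

theorem sum_inc_contractVtx (C : Set G.E) {e : G.E} {a b : G.V} (h : G.ends e = s(a, b))
    (q : (G.contract C).V) :
    ∑ v with contractVtx C v = q, inc e v =
      (Pi.single (contractVtx C a) 1 + Pi.single (contractVtx C b) 1 : _ → ZMod 2) q := by
  simp [inc_of_ends_eq h, Finset.sum_add_distrib, Pi.single_apply, eq_comm]

theorem bd_contract (C : Set G.E) (f : G.E → M) (q : (G.contract C).V) :
    bd (fun e : (G.contract C).E => f e.1) q = ∑ v with contractVtx C v = q, bd f v := by
  classical
  have hmem (e : G.E) (he : e ∈ C) : ∑ v with contractVtx C v = q, inc e v = 0 := by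
    obtain ⟨a, b, hab⟩ := exists_ends_eq e
    rw [sum_inc_contractVtx C hab, contractVtx_eq_of_mem he hab, ZModModule.add_self, Pi.zero_apply]
  have hnotMem (e : (G.contract C).E) :
      ∑ v with contractVtx C v = q, inc e.1 v = inc e q := by
    obtain ⟨a, b, hab⟩ := exists_ends_eq e.1
    rw [sum_inc_contractVtx C hab, inc_of_ends_eq (contract_ends C hab)]
  simp_rw [bd_apply, ← hnotMem]
  rw [Finset.sum_comm]
  simp_rw [← Finset.sum_smul]
  refine Finset.sum_of_injOn Subtype.val Subtype.val_injective.injOn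
    (fun _ _ => Finset.mem_univ _) (fun e _ he => ?_)
    fun _ _ => rfl
  rw [hmem e (by_contra fun heC => he ⟨⟨e, heC⟩, Finset.mem_univ _, rfl⟩), zero_smul]

theorem exists_bd_eq_of_sum_contractVtx_eq_zero {C : Set G.E} {b : G.V → M}
    (hb : ∀ q, ∑ v with contractVtx C v = q, b v = 0) :
    ∃ g : G.E → M, (∀ e ∉ C, g e = 0) ∧ bd g = b := by
  let rep : (G.contract C).V → G.V := Quot.out
  have hrep (v : G.V) : contractVtx C v = contractVtx C (rep (contractVtx C v)) :=
    (Quot.out_eq _).symm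
  choose K hK hbd using fun v => (reaches_of_contractVtx_eq (hrep v)).exists_bd_eq
  refine ⟨∑ v, fun e => K v e • b v, fun e he => by simp [hK _ e he], ?_⟩
  have hcancel (w : G.V) :
      ∑ v, (Pi.single (rep (contractVtx C v)) 1 : G.V → ZMod 2) w • b v = 0 := by
    rw [← Finset.sum_fiberwise Finset.univ (contractVtx C)]
    refine Finset.sum_eq_zero fun q _ => ?_
    rw [Finset.sum_congr rfl fun v hv => by rw [(Finset.mem_filter.1 hv).2], ← Finset.smul_sum,
      hb, smul_zero]
  ext w
  rw [map_sum, Finset.sum_apply]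
  simp_rw [bd_smul_const, hbd, Pi.add_apply, add_smul, Finset.sum_add_distrib, hcancel]
  simp [Pi.single_apply]

theorem exists_bd_eq_zero_of_contract {C : Set G.E} {f' : (G.contract C).E → M}
    (hf' : bd f' = 0) : ∃ f : G.E → M, bd f = 0 ∧ ∀ e : (G.contract C).E, f e.1 = f' e := by
  obtain ⟨f, hf⟩ : ∃ f : G.E → M, (fun e : (G.contract C).E => f e.1) = f' :=
    ⟨Function.extend Subtype.val f' 0,
      funext fun e => Subtype.val_injective.extend_apply f' 0 e⟩
  obtain ⟨g, hgC, hg⟩ := exists_bd_eq_of_sum_contractVtx_eq_zero (C := C) (b := bd f) fun q => by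
    rw [← bd_contract, hf, hf', Pi.zero_apply]
  refine ⟨f + g, by rw [map_add, hg, ZModModule.add_self], fun e => ?_⟩
  rw [Pi.add_apply, hgC e.1 e.2, add_zero, ← hf]

/-! ### Circuits -/

theorem degIn_union {S T : Set G.E} (h : Disjoint S T) (v : G.V) :
    G.degIn (S ∪ T) v = G.degIn S v + G.degIn T v := by
  have hcard (P : G.E → Prop) : Nat.card {e // e ∈ S ∪ T ∧ P e} =
      Nat.card {e // e ∈ S ∧ P e} + Nat.card {e // e ∈ T ∧ P e} :=
    (congrArg Set.ncard (Set.union_inter_distrib_right S T {e | P e})).trans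
      (Set.ncard_union_eq (h.mono Set.inter_subset_left Set.inter_subset_left))
  simp only [degIn, hcard]
  ring

theorem degIn_pos_iff {S : Set G.E} {v : G.V} : 0 < G.degIn S v ↔ ∃ e ∈ S, v ∈ G.ends e := by
  simp only [degIn, Nat.add_pos_iff_pos_or_pos, Nat.mul_pos_iff_of_pos_left two_pos,
    Finite.card_pos_iff, nonempty_subtype]
  constructor
  · rintro (⟨e, he, hv, -⟩ | ⟨e, he, hends⟩)
    · exact ⟨e, he, hv⟩
    · exact ⟨e, he, by simp [hends]⟩
  · rintro ⟨e, he, w, hends⟩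
    obtain rfl | hvw := eq_or_ne v w
    · exact .inr ⟨e, he, hends⟩
    · exact .inl ⟨e, he, by simp [hends, hvw]⟩

theorem bd_indicator_one (S : Set G.E) (v : G.V) :
    bd (S.indicator (1 : G.E → ZMod 2)) v = G.degIn S v := by
  classical
  simp [bd_apply, degIn, inc, Set.indicator_apply, CharTwo.two_eq_zero, Fintype.card_subtype,
    ← Finset.sum_boole, ← ite_and]

theorem isCycle_iff_bd_eq_zero {S : Set G.E} :
    G.IsCycle S ↔ bd (S.indicator (1 : G.E → ZMod 2)) = 0 := by
  simp [IsCycle, funext_iff, bd_indicator_one, ZMod.natCast_eq_zero_iff_even]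

theorem IsCircuit.isCycle {C : Set G.E} (hC : G.IsCircuit C) : G.IsCycle C := by
  intro v
  obtain h | h := (G.degIn C v).eq_zero_or_pos
  · simp [h]
  · simp [hC.2.1 v (degIn_pos_iff.1 h)]

theorem IsCircuit.eq_of_isCycle_of_subset {C D : Set G.E} (hC : G.IsCircuit C) (hD : G.IsCycle D)
    (hDC : D ⊆ C) (hne : D.Nonempty) : D = C := by
  have hspread (v : G.V) (hv : ∃ e ∈ D, v ∈ G.ends e) : ∀ e ∈ C, v ∈ G.ends e → e ∈ D := by
    intro e he hev
    by_contra heD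
    have hdeg := degIn_union (Set.disjoint_sdiff_right (s := D) (t := C)) v
    rw [Set.union_sdiff_cancel hDC, hC.2.1 v ⟨e, he, hev⟩] at hdeg
    have hD_pos : 0 < G.degIn D v := degIn_pos_iff.2 hv
    have hCD_pos : 0 < G.degIn (C \ D) v := degIn_pos_iff.2 ⟨e, ⟨he, heD⟩, hev⟩
    have hD_even := hD v
    rw [show G.degIn D v = 1 by omega] at hD_even
    exact Nat.not_even_one hD_even
  obtain ⟨e₀, he₀⟩ := hne
  obtain ⟨u, hu⟩ : ∃ u, u ∈ G.ends e₀ := ⟨_, Sym2.out_fst_mem _⟩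
  refine hDC.antisymm fun e he => ?_
  obtain ⟨w, hw⟩ : ∃ w, w ∈ G.ends e := ⟨_, Sym2.out_fst_mem _⟩
  have htouch (z : G.V) (hz : G.Reaches C u z) : ∃ e ∈ D, z ∈ G.ends e := by
    induction hz with
    | refl => exact ⟨e₀, he₀, hu⟩
    | tail _ hbc ih =>
      obtain ⟨e', he', hends⟩ := hbc
      exact ⟨e', hspread _ ih e' he' (by simp [hends]), by simp [hends]⟩
  exact hspread w (htouch w (hC.2.2 u w ⟨e₀, hDC he₀, hu⟩ ⟨e, he, hw⟩)) e he hw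

theorem Reaches.exists_path {S : Set G.E} {u w : G.V} (h : G.Reaches S u w) :
    ∃ (n : ℕ) (v : ℕ → G.V), v 0 = u ∧ v n = w ∧ Set.InjOn v (Set.Iic n) ∧
      ∀ t < n, ∃ e ∈ S, G.ends e = s(v t, v (t + 1)) := by
  let H : SimpleGraph G.V := .fromRel fun a b => ∃ e ∈ S, G.ends e = s(a, b)
  have hH : H.Reachable u w := by
    induction h with
    | refl => exact .rfl
    | @tail b c _ hbc ih =>
      obtain rfl | hne := eq_or_ne b c
      · exact ih
      · exact ih.trans (SimpleGraph.Adj.reachable ⟨hne, .inl hbc⟩)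
  obtain ⟨p, hp⟩ := hH.exists_isPath
  refine ⟨p.length, p.getVert, p.getVert_zero, p.getVert_length, hp.getVert_injOn,
    fun t ht => ?_⟩
  obtain ⟨-, h | ⟨e, he, hends⟩⟩ := p.adj_getVert_succ ht
  · exact h
  · exact ⟨e, he, hends.trans Sym2.eq_swap⟩

theorem IsCycle.reaches_diff_singleton {C : Set G.E} (hC : G.IsCycle C) {e : G.E} (he : e ∈ C)
    {a b : G.V} (h : G.ends e = s(a, b)) : G.Reaches (C \ {e}) b a := by
  obtain rfl | hab := eq_or_ne a b
  · exact .refl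
  have hbd : bd ((C \ {e}).indicator (1 : G.E → ZMod 2)) = Pi.single a 1 + Pi.single b 1 := by
    rw [Set.indicator_sdiff (Set.singleton_subset_iff.2 he), map_sub, isCycle_iff_bd_eq_zero.1 hC,
      Set.indicator_singleton, Pi.one_apply, bd_single h, zero_sub, ZModModule.neg_eq_self]
  obtain ⟨k, hkb, hreach, hk⟩ := exists_reaches_of_bd_ne_zero
    (f := (C \ {e}).indicator (1 : G.E → ZMod 2)) (j := b) (by simp [hbd, hab.symm])
  obtain rfl : k = a := by
    by_contra hka
    simp [hbd, hka, hkb] at hk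
  simpa [Set.support_indicator] using hreach

theorem bd_indicator_image_Ico {v : ℕ → G.V} {e : ℕ → G.E} {r m : ℕ} (hrm : r ≤ m)
    (hends : ∀ t ∈ Set.Ico r m, G.ends (e t) = s(v t, v (t + 1)))
    (hinj : Set.InjOn e (Set.Ico r m)) :
    bd ((e '' Set.Ico r m).indicator (1 : G.E → ZMod 2)) =
      Pi.single (v r) 1 + Pi.single (v m) 1 := by
  induction m, hrm using Nat.le_induction with
  | base =>
    rw [Set.Ico_self, Set.image_empty, Set.indicator_empty', map_zero, ZModModule.add_self]
  | succ m hrm ih =>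
    have hinsert : Set.Ico r (m + 1) = insert m (Set.Ico r m) := by grind
    rw [hinsert] at hends hinj
    have hm : e m ∉ e '' Set.Ico r m := fun ⟨t, ht, htm⟩ =>
      ht.2.ne (hinj (.inr ht) (.inl rfl) htm)
    rw [hinsert, Set.image_insert_eq, Set.insert_eq,
      Set.indicator_union_of_disjoint (Set.disjoint_singleton_left.2 hm),
      ← Pi.add_def, map_add, Set.indicator_singleton, Pi.one_apply,
      bd_single (hends m (.inl rfl)), ih (fun t ht => hends t (.inr ht)) 
        (hinj.mono (Set.subset_insert _ _)),
      add_comm, ZModModule.add_add_add_cancel]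

/-- A closed walk `v 0, e 0, v 1, …, e (n - 1), v n = v 0` traversing `C` once without repeating
vertices. Only the values of `v` up to `n` and those of `e` below `n` are relevant. -/
structure IsTour (C : Set G.E) (n : ℕ) (v : ℕ → G.V) (e : ℕ → G.E) : Prop where
  ends_edge : ∀ t < n, G.ends (e t) = s(v t, v (t + 1))
  vtx_closed : v n = v 0
  vtx_injOn : Set.InjOn v (Set.Iio n)
  edge_bijOn : Set.BijOn e (Set.Iio n) C

theorem edge_injOn_of_vtx_injOn {v : ℕ → G.V} {e : ℕ → G.E} {n : ℕ}
    (hends : ∀ t < n, G.ends (e t) = s(v t, v (t + 1))) (hv : Set.InjOn v (Set.Iic n)) :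
    Set.InjOn e (Set.Iio n) := by
  intro s hs t ht hst
  simp only [Set.mem_Iio] at hs ht
  have h := congrArg G.ends hst
  rw [hends s hs, hends t ht, Sym2.eq_iff] at h
  obtain ⟨h, -⟩ | ⟨h₁, h₂⟩ := h
  · exact hv hs.le ht.le h
  · have := hv (Set.mem_Iic.2 hs.le) (Set.mem_Iic.2 ht) h₁
    have := hv (Set.mem_Iic.2 hs) (Set.mem_Iic.2 ht.le) h₂
    omega

theorem exists_isTour_of_path {v : ℕ → G.V} {e : ℕ → G.E} {e₀ : G.E} {n : ℕ}
    (hends : ∀ t < n, G.ends (e t) = s(v t, v (t + 1))) (hv : Set.InjOn v (Set.Iic n))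
    (hends₀ : G.ends e₀ = s(v n, v 0)) (he₀ : e₀ ∉ e '' Set.Iio n) :
    ∃ v' e', IsTour (insert e₀ (e '' Set.Iio n)) (n + 1) v' e' := by
  have hv' : Set.EqOn v (Function.update v (n + 1) (v 0)) (Set.Iic n) := fun t ht =>
    (Function.update_of_ne (Nat.lt_succ_of_le ht).ne _ _).symm
  have he' : Set.EqOn e (Function.update e n e₀) (Set.Iio n) := fun t ht =>
    (Function.update_of_ne (Set.mem_Iio.1 ht).ne _ _).symm
  have hIio : Set.Iio (n + 1) = Set.Iic n := by grind
  refine ⟨Function.update v (n + 1) (v 0), Function.update e n e₀, fun t ht => ?_, ?_, ?_, ?_⟩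
  · obtain ht | rfl := Nat.lt_succ_iff_lt_or_eq.1 ht
    · rw [← he' ht, ← hv' (Set.mem_Iic.2 ht.le), ← hv' (Set.mem_Iic.2 ht), hends t ht]
    · rw [← hv' (Set.mem_Iic.2 le_rfl), Function.update_self, Function.update_self, hends₀]
  · rw [← hv' (Set.mem_Iic.2 n.zero_le), Function.update_self]
  · exact hIio ▸ hv.congr hv'
  · have hbij := ((edge_injOn_of_vtx_injOn hends hv).bijOn_image.congr he').insert (a := n)
    rw [Function.update_self, Set.Iio_insert] at hbij
    exact hIio ▸ hbij he₀

theorem IsTour.isCycle {C : Set G.E} {n : ℕ} {v : ℕ → G.V} {e : ℕ → G.E} (h : IsTour C n v e) :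
    G.IsCycle C := by
  have hIco : Set.Ico 0 n = Set.Iio n := by grind
  have hbd := bd_indicator_image_Ico n.zero_le (fun t ht => h.ends_edge t ht.2)
    (hIco ▸ h.edge_bijOn.injOn)
  rwa [hIco, h.edge_bijOn.image_eq, h.vtx_closed, ZModModule.add_self,
    ← isCycle_iff_bd_eq_zero] at hbd

theorem IsCircuit.exists_isTour {C : Set G.E} (hC : G.IsCircuit C) :
    ∃ n v e, 0 < n ∧ IsTour C n v e := by
  obtain ⟨e₀, he₀⟩ := hC.1
  obtain ⟨a, b, hab⟩ := exists_ends_eq e₀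
  obtain ⟨n, v, hv0, hvn, hv, hpath⟩ := (hC.isCycle.reaches_diff_singleton he₀ hab).exists_path
  have : Nonempty G.E := ⟨e₀⟩
  choose! e he hends using hpath
  have hpathC : e '' Set.Iio n ⊆ C \ {e₀} := Set.image_subset_iff.2 he
  obtain ⟨v', e', htour⟩ := exists_isTour_of_path hends hv (by rw [hv0, hvn, hab])
    fun h => (hpathC h).2 rfl
  have hC' : insert e₀ (e '' Set.Iio n) = C :=
    hC.eq_of_isCycle_of_subset htour.isCycle
      (Set.insert_subset he₀ (hpathC.trans Set.sdiff_subset)) (Set.insert_nonempty _ _)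
  exact ⟨n + 1, v', e', n.succ_pos, hC' ▸ htour⟩

/-! ### Heights of sign sequences -/

/-- The sign `(-1) ^ a` of `a : ℤ₂`, as an integer. -/
def sgn (a : ZMod 2) : ℤ := if a = 0 then 1 else -1

/-- The position after `t` steps of the walk on `ℤ` with steps `sgn (ε 0), sgn (ε 1), …`. -/
def height (ε : ℕ → ZMod 2) (t : ℕ) : ℤ := ∑ s ∈ Finset.range t, sgn (ε s)

theorem sgn_add_one (a : ZMod 2) : sgn (a + 1) = -sgn a := by
  decide +revert

theorem sgn_le_one (a : ZMod 2) : sgn a ≤ 1 := by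
  decide +revert

theorem height_zero (ε : ℕ → ZMod 2) : height ε 0 = 0 := rfl

theorem height_succ (ε : ℕ → ZMod 2) (t : ℕ) : height ε (t + 1) = height ε t + sgn (ε t) :=
  Finset.sum_range_succ _ _

theorem height_add_one (ε : ℕ → ZMod 2) (t : ℕ) : height (ε + 1) t = -height ε t := by
  simp [height, sgn_add_one]

theorem height_le (ε : ℕ → ZMod 2) (t : ℕ) : height ε t ≤ t := by
  simpa [height] using Finset.sum_le_card_nsmul (Finset.range t) (fun s => sgn (ε s)) 1
    fun s _ => sgn_le_one _

theorem height_add_indicator_Ico (ε : ℕ → ZMod 2) {r m : ℕ} (hrm : r ≤ m) (t : ℕ) :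
    height (ε + (Set.Ico r m).indicator 1) t =
      height ε t - 2 * (height ε (min t m) - height ε (min t r)) := by
  induction t with
  | zero => simp [height_zero]
  | succ t ih =>
    rw [height_succ, ih, height_succ, Pi.add_apply]
    obtain htr | hrt := lt_or_ge t r
    · rw [Set.indicator_of_notMem fun h => htr.not_ge h.1, min_eq_left (by omega : t ≤ m),
        min_eq_left htr.le, min_eq_left (by omega : t + 1 ≤ m), min_eq_left htr, add_zero]
      ring
    · rw [min_eq_right hrt, min_eq_right (by omega : r ≤ t + 1)]
      obtain htm | hmt := lt_or_ge t m
      · rw [Set.indicator_of_mem (Set.mem_Ico.2 ⟨hrt, htm⟩), Pi.one_apply, sgn_add_one,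
          min_eq_left htm.le, min_eq_left htm, height_succ]
        ring
      · rw [Set.indicator_of_notMem fun h => hmt.not_gt h.2, add_zero, min_eq_right hmt,
          min_eq_right (by omega : m ≤ t + 1)]
        ring

/-- The sequence `ε` with its terms between the positions `r` and `m`, taken in whichever order,
flipped. This reflects the walk of `ε` between these positions. -/
noncomputable def switch (ε : ℕ → ZMod 2) (r m : ℕ) : ℕ → ZMod 2 :=
  ε + (Set.Ico (min r m) (max r m)).indicator 1

theorem height_lt_switch_of_peak {ε : ℕ → ZMod 2} {n c r : ℕ} (hc : ε c = 0) (hc' : ε (c + 1) = 1)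
    (hcn : c + 1 < n) (hrn : r < n) (hrc : r ≠ c + 1)
    (hbal : height (switch ε r (c + 1)) n = height ε n) :
    ∃ t < n, height ε (c + 1) < height (switch ε r (c + 1)) t := by
  have hup : height ε (c + 1) = height ε c + 1 := by rw [height_succ, hc]; rfl
  have hdown : height ε (c + 2) = height ε (c + 1) - 1 := by rw [height_succ, hc']; rfl
  have hswitch := height_add_indicator_Ico ε (min_le_max (a := r) (b := c + 1))
  have hlevel : height ε r = height ε (c + 1) := by
    rw [switch, hswitch, min_eq_right (by omega), min_eq_right (by omega)] at hbal
    obtain hle | hle := le_total r (c + 1)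
    · rw [max_eq_right hle, min_eq_left hle] at hbal
      linarith
    · rw [max_eq_left hle, min_eq_right hle] at hbal
      linarith
  obtain hlt | hgt := lt_or_gt_of_ne hrc
  · refine ⟨c, by omega, ?_⟩
    rw [switch, hswitch, max_eq_right hlt.le, min_eq_left hlt.le, min_eq_left c.le_succ,
      min_eq_right (Nat.le_of_lt_succ hlt)]
    linarith
  · refine ⟨c + 2, by omega, ?_⟩
    rw [switch, hswitch, max_eq_left hgt.le, min_eq_right hgt.le, min_eq_left hgt,
      min_eq_right (Nat.le_succ _)]
    linarith

theorem exists_height_one_eq_one {𝓔 : Set (ℕ → ZMod 2)} (hne : 𝓔.Nonempty)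
    (hcompl : ∀ ε ∈ 𝓔, ε + 1 ∈ 𝓔) :
    ∃ ε ∈ 𝓔, height ε 1 = 1 := by
  obtain ⟨ε, hε⟩ := hne
  by_cases h : ε 0 = 0
  · exact ⟨ε, hε, by simp [height, sgn, h]⟩
  · exact ⟨ε + 1, hcompl ε hε, by rw [height_add_one]; simp [height, sgn, h]⟩

theorem exists_forall_height_le {𝓔 : Set (ℕ → ZMod 2)} {n : ℕ} (hne : 𝓔.Nonempty) :
    ∃ ε ∈ 𝓔, ∃ t ≤ n, ∀ ε' ∈ 𝓔, ∀ s ≤ n, height ε' s ≤ height ε t := by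
  obtain ⟨ε₀, hε₀⟩ := hne
  obtain ⟨M, ⟨ε, hε, t, ht, rfl⟩, hM⟩ := Int.exists_greatest_of_bdd
    (P := fun z => ∃ ε ∈ 𝓔, ∃ t ≤ n, height ε t = z)
    ⟨n, fun z ⟨ε, _, t, ht, hz⟩ => hz ▸ (height_le ε t).trans (mod_cast ht)⟩
    ⟨_, ε₀, hε₀, 0, n.zero_le, rfl⟩
  exact ⟨ε, hε, t, ht, fun ε' hε' s hs => hM _ ⟨ε', hε', s, hs, rfl⟩⟩

theorem exists_height_ne_zero {𝓔 : Set (ℕ → ZMod 2)} {n : ℕ} (hn : 0 < n) (hne : 𝓔.Nonempty)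
    (hcompl : ∀ ε ∈ 𝓔, ε + 1 ∈ 𝓔)
    (hswitch : ∀ ε ∈ 𝓔, ∀ c, c + 1 < n → ε c ≠ ε (c + 1) →
      ∃ r < n, r ≠ c + 1 ∧ switch ε r (c + 1) ∈ 𝓔) :
    ∃ ε ∈ 𝓔, height ε n ≠ 0 := by
  by_contra! hbal
  obtain ⟨ε, hε, t, ht, hmax⟩ := exists_forall_height_le (n := n) hne
  have hpos : 0 < height ε t := by
    obtain ⟨ε₁, hε₁, h₁⟩ := exists_height_one_eq_one hne hcompl
    exact zero_lt_one.trans_le (h₁ ▸ hmax ε₁ hε₁ 1 hn)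
  obtain ⟨c, rfl⟩ : ∃ c, t = c + 1 := Nat.exists_eq_succ_of_ne_zero fun h => by
    simp [h, height_zero] at hpos
  have hcn : c + 1 < n := lt_of_le_of_ne ht fun h => by simp [h, hbal ε hε] at hpos
  have hc : ε c = 0 := by
    by_contra h
    have := hmax ε hε c (by omega)
    simp [height_succ, sgn, h] at this
  have hc' : ε (c + 1) = 1 := Fin.eq_one_of_ne_zero _ fun (h : ε (c + 1) = 0) => by
    have := hmax ε hε (c + 2) hcn
    simp [height_succ ε (c + 1), sgn, h] at this
  obtain ⟨r, hrn, hrc, hmem⟩ := hswitch ε hε c hcn (by simp [hc, hc'])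
  obtain ⟨s, hs, hlt⟩ := height_lt_switch_of_peak hc hc' hcn hrn hrc
    ((hbal _ hmem).trans (hbal ε hε).symm)
  exact hlt.not_ge (hmax _ hmem s hs.le)

/-! ### Flows that are nonzero off a circuit -/

/-- An `M`-flow whose zeros all lie in `C`. Among these, one with few zeros is sought. -/
structure IsFlowOff (C : Set G.E) (f : G.E → M) : Prop where
  bd_eq_zero : bd f = 0
  ne_zero : ∀ e ∉ C, f e ≠ 0

theorem IsFlowOff.add_smul {C : Set G.E} {f : G.E → M} (hf : IsFlowOff C f) {p : G.E → ZMod 2}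
    {a : M} (hp : bd p = 0) (hpa : ∀ e ∉ C, p e ≠ 0 → f e ≠ a) :
    IsFlowOff C (fun e => f e + p e • a) where
  bd_eq_zero := by
    ext v
    rw [← Pi.add_def, map_add, hf.bd_eq_zero, zero_add, bd_smul_const, hp, Pi.zero_apply, zero_smul,
      Pi.zero_apply]
  ne_zero e he := by
    by_cases hpe : p e = 0
    · simpa [hpe] using hf.ne_zero e he
    · rw [show p e = 1 from Fin.eq_one_of_ne_zero _ hpe, one_smul, ← ZModModule.sub_eq_add]
      exact sub_ne_zero.2 (hpa e he hpe)

theorem IsFlowOff.add_indicator_smul {C : Set G.E} {f : G.E → M} (hf : IsFlowOff C f)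
    (hC : G.IsCycle C) (a : M) :
    IsFlowOff C (fun e => f e + C.indicator (1 : G.E → ZMod 2) e • a) :=
  hf.add_smul (isCycle_iff_bd_eq_zero.1 hC) fun _ he h => (h (Set.indicator_of_notMem he _)).elim

theorem exists_kempe_chain {C : Set G.E} {f : G.E → M} (hf : bd f = 0) (φ : M →ₗ[ZMod 2] ZMod 2)
    {j : G.V} (hj : φ (bd (C.indicator f) j) ≠ 0) :
    ∃ (K : G.E → ZMod 2) (k : G.V), k ≠ j ∧ (∃ e ∈ C, k ∈ G.ends e) ∧
      bd K = Pi.single j 1 + Pi.single k 1 ∧ ∀ e, K e ≠ 0 → e ∉ C ∧ φ (f e) ≠ 0 := by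
  have hbd (v : G.V) : bd (fun e => φ (Cᶜ.indicator f e)) v = φ (bd (C.indicator f) v) := by
    rw [bd_comp, Set.indicator_compl, map_sub, hf, zero_sub, ZModModule.neg_eq_self]
  rw [← hbd] at hj
  obtain ⟨k, hkj, hreach, hk⟩ := exists_reaches_of_bd_ne_zero hj
  obtain ⟨K, hK, hbdK⟩ := hreach.exists_bd_eq
  refine ⟨K, k, hkj, ?_, hbdK, fun e he => ?_⟩
  · by_contra! hkC
    rw [hbd, bd_apply_eq_zero fun e hke => Set.indicator_of_notMem (fun heC => hkC e heC hke) f,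
      map_zero] at hk
    exact hk rfl
  · have hφ : φ (Cᶜ.indicator f e) ≠ 0 := by
      by_contra h
      exact he (hK e (Function.notMem_support.2 h))
    have heC : e ∈ Cᶜ := Set.mem_of_indicator_ne_zero fun h => hφ (by rw [h, map_zero])
    exact ⟨heC, by rwa [Set.indicator_of_mem heC] at hφ⟩

theorem IsFlowOff.exists_kempe_switch {C : Set G.E} {f : G.E → ZMod 2 × ZMod 2}
    (hf : IsFlowOff C f) {j : G.V} (hj : (bd (C.indicator f) j).1 ≠ 0) :
    ∃ k ≠ j, (∃ e ∈ C, k ∈ G.ends e) ∧ ∀ p : G.E → ZMod 2, (∀ e ∉ C, p e = 0) →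
      bd p = Pi.single j 1 + Pi.single k 1 →
        ∃ f' : G.E → ZMod 2 × ZMod 2, IsFlowOff C f' ∧ ∀ e ∈ C, (f' e).1 = (f e).1 + p e := by
  set y := (bd (C.indicator f) j).2
  -- The functional with kernel `{0, (1, y + 1)}`, which does not contain `bd (C.indicator f) j`.
  let φ : ZMod 2 × ZMod 2 →ₗ[ZMod 2] ZMod 2 := .coprod ((y + 1) • .id) .id
  have hφ : φ (bd (C.indicator f) j) ≠ 0 := by
    have hne : ∀ x y : ZMod 2, x ≠ 0 → (y + 1) • x + y ≠ 0 := by decide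
    exact hne _ y hj
  have hker : φ (1, y + 1) = 0 := by simp [φ, ZModModule.add_self]
  obtain ⟨K, k, hkj, hkC, hbdK, hK⟩ := exists_kempe_chain hf.bd_eq_zero φ hφ
  refine ⟨k, hkj, hkC, fun p hpC hbdp => ⟨fun e => f e + (K + p) e • (1, y + 1),
    hf.add_smul ?_ fun e he hKp => ?_, fun e he => ?_⟩⟩
  · rw [map_add, hbdK, hbdp, ZModModule.add_self]
  · rw [Pi.add_apply, hpC e he, add_zero] at hKp
    exact fun h => (hK e hKp).2 (h ▸ hker)
  · have hKe : K e = 0 := by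
      by_contra h
      exact (hK e h).1 he
    simp [hKe]

/-! ### Switching along a tour -/

theorem bd_indicator_apply (C : Set G.E) (f : G.E → M) (w : G.V) :
    bd (C.indicator f) w = ∑ᶠ e ∈ C, inc e w • f e := by
  rw [bd_apply, finsum_mem_def, finsum_eq_sum_of_fintype]
  exact Finset.sum_congr rfl fun e _ => 
    (Set.indicator_smul_apply C (inc · w) f e).symm

section IsTour

variable {C : Set G.E} {n : ℕ} {v : ℕ → G.V} {e : ℕ → G.E}

theorem IsTour.finsum_mem_eq_sum_range {A : Type*} [AddCommMonoid A] (h : IsTour C n v e)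
    (g : G.E → A) : ∑ᶠ e ∈ C, g e = ∑ t ∈ Finset.range n, g (e t) := by
  rw [← finsum_mem_coe_finset, Finset.coe_range]
  exact (finsum_mem_eq_of_bijOn e h.edge_bijOn fun _ _ => rfl).symm

theorem IsTour.exists_vtx_eq (h : IsTour C n v e) {w : G.V} (hw : ∃ e ∈ C, w ∈ G.ends e) :
    ∃ r < n, v r = w := by
  obtain ⟨_, he, hw⟩ := hw
  obtain ⟨t, ht, rfl⟩ := h.edge_bijOn.surjOn he
  rw [h.ends_edge t ht, Sym2.mem_iff] at hw
  obtain rfl | rfl := hw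
  · exact ⟨t, ht, rfl⟩
  · obtain hlt | heq := (Nat.succ_le_of_lt ht).lt_or_eq
    · exact ⟨t + 1, hlt, rfl⟩
    · exact ⟨0, t.zero_le.trans_lt ht, by rw [← h.vtx_closed, ← heq]⟩

theorem IsTour.vtx_eq_vtx_succ_iff (h : IsTour C n v e) {c t : ℕ} (hc : c + 1 < n) (ht : t ≤ n) :
    v t = v (c + 1) ↔ t = c + 1 := by
  obtain hlt | rfl := ht.lt_or_eq
  · exact h.vtx_injOn.eq_iff hlt hc
  · rw [h.vtx_closed, h.vtx_injOn.eq_iff (Set.mem_Iio.2 (by omega)) hc]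
    omega

theorem IsTour.bd_indicator_vtx_succ (h : IsTour C n v e) (f : G.E → M) {c : ℕ} (hc : c + 1 < n) :
    bd (C.indicator f) (v (c + 1)) = f (e c) + f (e (c + 1)) := by
  rw [bd_indicator_apply, h.finsum_mem_eq_sum_range]
  have hinc : ∀ t ∈ Finset.range n, inc (e t) (v (c + 1)) • f (e t) =
      (if t = c + 1 then f (e t) else 0) + (if t = c then f (e t) else 0) := by
    intro t ht
    have ht := Finset.mem_range.1 ht
    simp [inc_of_ends_eq (h.ends_edge t ht), Pi.single_apply, eq_comm (a := v (c + 1)),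
      h.vtx_eq_vtx_succ_iff hc ht.le, h.vtx_eq_vtx_succ_iff hc ht, add_smul]
  rw [Finset.sum_congr rfl hinc, Finset.sum_add_distrib, add_comm]
  simp [hc, Nat.lt_of_succ_lt hc]

theorem IsTour.exists_switch (h : IsTour C n v e) {f : G.E → ZMod 2 × ZMod 2}
    (hf : IsFlowOff C f) {ε : ℕ → ZMod 2} (hε : ∀ t < n, ε t = (f (e t)).1) {c : ℕ}
    (hc : c + 1 < n) (hne : ε c ≠ ε (c + 1)) :
    ∃ r < n, r ≠ c + 1 ∧
      ∃ f' : G.E → ZMod 2 × ZMod 2, IsFlowOff C f' ∧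
        ∀ t < n, switch ε r (c + 1) t = (f' (e t)).1 := by
  obtain ⟨k, hk, hkC, hswitch⟩ := hf.exists_kempe_switch (j := v (c + 1)) <| by
    rw [h.bd_indicator_vtx_succ f hc, Prod.fst_add, ← hε c (by omega), ← hε _ hc,
      ← ZModModule.sub_eq_add]
    exact sub_ne_zero.2 hne
  obtain ⟨r, hr, rfl⟩ := h.exists_vtx_eq hkC
  have hIco : Set.Ico (min r (c + 1)) (max r (c + 1)) ⊆ Set.Iio n := fun t ht =>
    ht.2.trans (max_lt hr hc)
  have hinj := h.edge_bijOn.injOn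
  have hC : e '' Set.Ico (min r (c + 1)) (max r (c + 1)) ⊆ C :=
    (Set.image_mono hIco).trans h.edge_bijOn.image_eq.subset
  obtain ⟨f', hf', hf'C⟩ := hswitch
    ((e '' Set.Ico (min r (c + 1)) (max r (c + 1))).indicator 1)
    (fun e he => Set.indicator_of_notMem (fun h => he (hC h)) _) <| by
      rw [bd_indicator_image_Ico min_le_max (fun t ht => h.ends_edge t (hIco ht)) (hinj.mono hIco)]
      obtain hle | hle := le_total r (c + 1) <;> simp [hle, add_comm]
  refine ⟨r, hr, fun hrc => hk (by rw [hrc]), f', hf', fun t ht => ?_⟩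
  rw [hf'C _ (h.edge_bijOn.mapsTo ht), ← hε t ht, switch, Pi.add_apply]
  classical
  simp only [Set.indicator_apply, hinj.mem_image_iff hIco ht, Pi.one_apply]

end IsTour

theorem IsCircuit.exists_finsum_sgn_ne_zero {C : Set G.E} (hC : G.IsCircuit C)
    {f₀ : G.E → ZMod 2 × ZMod 2} (hf₀ : IsFlowOff C f₀) :
    ∃ f : G.E → ZMod 2 × ZMod 2, IsFlowOff C f ∧ ∑ᶠ e ∈ C, sgn (f e).1 ≠ 0 := by
  obtain ⟨n, v, e, hn, htour⟩ := hC.exists_isTour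
  let 𝓔 : Set (ℕ → ZMod 2) :=
    {ε | ∃ f : G.E → ZMod 2 × ZMod 2, IsFlowOff C f ∧ ∀ t < n, ε t = (f (e t)).1}
  have hne : 𝓔.Nonempty := ⟨_, f₀, hf₀, fun _ _ => rfl⟩
  have hcompl : ∀ ε ∈ 𝓔, ε + 1 ∈ 𝓔 := fun ε ⟨f, hf, hε⟩ =>
    ⟨_, hf.add_indicator_smul hC.isCycle (1, 0), fun t ht => by
      simp [hε t ht, htour.edge_bijOn.mapsTo ht]⟩
  obtain ⟨ε, ⟨f, hf, hε⟩, hheight⟩ := exists_height_ne_zero hn hne hcompl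
    fun ε ⟨f, hf, hε⟩ c hc hεc => htour.exists_switch hf hε hc hεc
  refine ⟨f, hf, ?_⟩
  rwa [htour.finsum_mem_eq_sum_range,
    ← Finset.sum_congr rfl fun t ht => congrArg sgn (hε t (Finset.mem_range.1 ht))]

/-! ### Counting -/

theorem finsum_mem_comp_eq_sum_ncard_smul {α β A : Type*} [Fintype β] [AddCommMonoid A] {s : Set α}
    (hs : s.Finite) (f : α → β) (g : β → A) :
    ∑ᶠ x ∈ s, g (f x) = ∑ b, {x ∈ s | f x = b}.ncard • g b := by
  classical
  lift s to Finset α using hs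
  rw [finsum_mem_coe_finset, ← Finset.sum_fiberwise' s f g]
  refine Finset.sum_congr rfl fun b _ => ?_
  rw [Finset.sum_const, ← Set.ncard_coe_finset, Finset.coe_filter]
  rfl

theorem exists_card_mul_ncard_lt {α β : Type*} [Fintype β] {s : Set α} (hs : s.Finite)
    {f : α → β} {g : β → ℤ} (hg : ∑ b, g b = 0) (hsum : ∑ᶠ x ∈ s, g (f x) ≠ 0) :
    ∃ b, Fintype.card β * {x ∈ s | f x = b}.ncard < s.ncard := by
  rw [finsum_mem_comp_eq_sum_ncard_smul hs] at hsum
  by_contra! hle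
  have hcard : s.ncard = ∑ b, {x ∈ s | f x = b}.ncard := by
    simpa using finsum_mem_comp_eq_sum_ncard_smul hs f fun _ => (1 : ℕ)
  have heq : ∀ b ∈ Finset.univ, s.ncard = Fintype.card β * {x ∈ s | f x = b}.ncard :=
    (Finset.sum_eq_sum_iff_of_le fun b _ => hle b).1 <| by
      rw [← Finset.mul_sum, ← hcard, Finset.sum_const, smul_eq_mul, Finset.card_univ]
  have hβ : Fintype.card β ≠ 0 := fun h => hsum <| by
    have := Fintype.card_eq_zero_iff.1 h
    exact Finset.sum_eq_zero fun b => isEmptyElim b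
  refine hsum ((mul_eq_zero.1 ?_).resolve_left (Nat.cast_ne_zero.2 hβ))
  calc (Fintype.card β : ℤ) * ∑ b, {x ∈ s | f x = b}.ncard • g b
      = ∑ b, s.ncard * g b := by
        rw [Finset.mul_sum]
        refine Finset.sum_congr rfl fun b hb => ?_
        rw [nsmul_eq_mul, ← mul_assoc, ← Nat.cast_mul, ← heq b hb]
    _ = 0 := by rw [← Finset.mul_sum, hg, mul_zero]

theorem IsCircuit.exists_four_mul_ncard_lt {C : Set G.E} (hC : G.IsCircuit C)
    {f₀ : G.E → ZMod 2 × ZMod 2} (hf₀ : IsFlowOff C f₀) :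
    ∃ f : G.E → ZMod 2 × ZMod 2, IsFlowOff C f ∧ 4 * {e ∈ C | f e = 0}.ncard < C.ncard := by
  obtain ⟨f, hf, hsgn⟩ := hC.exists_finsum_sgn_ne_zero hf₀
  obtain ⟨a, ha⟩ := exists_card_mul_ncard_lt C.toFinite
    (g := fun a : ZMod 2 × ZMod 2 => sgn a.1) (by decide) hsgn
  refine ⟨_, hf.add_indicator_smul hC.isCycle a, ?_⟩
  have hzero : {e ∈ C | f e + C.indicator (1 : G.E → ZMod 2) e • a = 0} = {e ∈ C | f e = a} := by
    ext e
    refine and_congr_right fun he => ?_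
    rw [Set.indicator_of_mem he, Pi.one_apply, one_smul, ← ZModModule.sub_eq_add, sub_eq_zero]
  rw [hzero]
  simpa using ha

end Multigraph

open Multigraph in
/-- If `C` is a circuit of `G` and the contracted graph `G/C`
admits a nowhere-zero `ℤ₂×ℤ₂`-flow, then `G` admits a `ℤ₂×ℤ₂`-flow `f` with
`E(G) − E(C) ⊆ supp f` and `|E_{f=(0,0)}(C)| < |E(C)|/4`. -/
theorem circuit_contract_flow (G : Multigraph) (C : Set G.E)
    (hC : G.IsCircuit C)
    (hnz : ∃ f' : (G.contract C).E → ZMod 2 × ZMod 2,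
      (G.contract C).IsFlow f' ∧ ∀ e, f' e ≠ (0, 0)) :
    ∃ f : G.E → ZMod 2 × ZMod 2, G.IsFlow f ∧
      (∀ e : G.E, e ∉ C → f e ≠ (0, 0)) ∧
      ({e ∈ C | f e = (0, 0)}.ncard : ℝ) < (1 / 4) * (C.ncard : ℝ) := by
  obtain ⟨f', hf', hne⟩ := hnz
  obtain ⟨f₀, hbd, hf₀⟩ := exists_bd_eq_zero_of_contract ((isFlow_iff_bd_eq_zero f').1 hf')
  have hoff : IsFlowOff C f₀ := ⟨hbd, fun e he => hf₀ ⟨e, he⟩ ▸ hne ⟨e, he⟩⟩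
  obtain ⟨f, hf, hlt⟩ := hC.exists_four_mul_ncard_lt hoff
  refine ⟨f, (isFlow_iff_bd_eq_zero f).2 hf.bd_eq_zero, hf.ne_zero, ?_⟩
  have hlt' : (4 : ℝ) * {e ∈ C | f e = 0}.ncard < C.ncard := mod_cast hlt
  rw [Prod.mk_zero_zero]
  linarith
end
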